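/- Assume the setting below. If ū is a viscosity subsolution of (★) and v̄ is a viscosity supersolution of (★), and both ū and v̄ are continuous on [0,T] × ℝ^d with polynomial growth (i.e. |ū(t,x)| + |v̄(t,x)| ≤ C(1+‖x‖^γ) for some constants C, γ), then ū(t,x) ≤ v̄(t,x) for all (t,x) ∈ [0,T] × ℝ^d. -/

import Mathlib

open Set Matrix
open scoped InnerProductSpace

noncomputable section

/-- Time derivative `∂_t φ(t,x)`. -/
def timeDeriv {d : ℕ} (φ : ℝ × EuclideanSpace ℝ (Fin d) → ℝ) (t : ℝ)
    (x : EuclideanSpace ℝ (Fin d)) : ℝ :=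
  deriv (fun s => φ (s, x)) t

/-- Spatial gradient `∇_x φ(t,x)`. -/
def spaceGrad {d : ℕ} (φ : ℝ × EuclideanSpace ℝ (Fin d) → ℝ) (t : ℝ)
    (x : EuclideanSpace ℝ (Fin d)) : EuclideanSpace ℝ (Fin d) :=
  gradient (fun y => φ (t, y)) x

/-- Spatial Hessian matrix `D²_x φ(t,x)`. -/
def spaceHess {d : ℕ} (φ : ℝ × EuclideanSpace ℝ (Fin d) → ℝ) (t : ℝ)
    (x : EuclideanSpace ℝ (Fin d)) : Matrix (Fin d) (Fin d) ℝ :=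
  fun i j => fderiv ℝ (fun y => fderiv ℝ (fun z => φ (t, z)) y (EuclideanSpace.single j 1)) x
    (EuclideanSpace.single i 1)

/-- The second order operator `ℒφ(t,x) = ½ Tr[σσᵀ(t,x) D²_x φ(t,x)]`. -/
def genL {d : ℕ} (σm : ℝ → EuclideanSpace ℝ (Fin d) → Matrix (Fin d) (Fin d) ℝ)
    (φ : ℝ × EuclideanSpace ℝ (Fin d) → ℝ) (t : ℝ) (x : EuclideanSpace ℝ (Fin d)) : ℝ :=
  (1 / 2) * (σm t x * (σm t x)ᵀ * spaceHess φ t x).trace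

/-- A matrix acting on a Euclidean vector. -/
def mvec {d : ℕ} (M : Matrix (Fin d) (Fin d) ℝ) (v : EuclideanSpace ℝ (Fin d)) :
    EuclideanSpace ℝ (Fin d) :=
  Matrix.toEuclideanLin M v

/-- The Hamiltonian `H(t,x,z,u,v) = z·σ(t,x)⁻¹ f(t,x,u,v) + Γ(t,x,u,v)`. -/
def Hfun {d : ℕ} {A B : Type*}
    (σm : ℝ → EuclideanSpace ℝ (Fin d) → Matrix (Fin d) (Fin d) ℝ)
    (f : ℝ → EuclideanSpace ℝ (Fin d) → A → B → EuclideanSpace ℝ (Fin d))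
    (Γ : ℝ → EuclideanSpace ℝ (Fin d) → A → B → ℝ)
    (t : ℝ) (x z : EuclideanSpace ℝ (Fin d)) (u : A) (v : B) : ℝ :=
  ⟪z, mvec (σm t x)⁻¹ (f t x u v)⟫_ℝ + Γ t x u v

/-- The (lower) value `H*(t,x,z) = inf_u sup_v H(t,x,z,u,v)` of the Hamiltonian. -/
def Hstar {d : ℕ} {A B : Type*}
    (σm : ℝ → EuclideanSpace ℝ (Fin d) → Matrix (Fin d) (Fin d) ℝ)
    (f : ℝ → EuclideanSpace ℝ (Fin d) → A → B → EuclideanSpace ℝ (Fin d))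
    (Γ : ℝ → EuclideanSpace ℝ (Fin d) → A → B → ℝ)
    (t : ℝ) (x z : EuclideanSpace ℝ (Fin d)) : ℝ :=
  ⨅ u : A, ⨆ v : B, Hfun σm f Γ t x z u v

/-- Viscosity subsolution of the transformed double-obstacle equation (★). -/
def IsSubsolStar {d : ℕ} {A B : Type*} (T : ℝ)
    (σm : ℝ → EuclideanSpace ℝ (Fin d) → Matrix (Fin d) (Fin d) ℝ)
    (f : ℝ → EuclideanSpace ℝ (Fin d) → A → B → EuclideanSpace ℝ (Fin d))
    (Γ : ℝ → EuclideanSpace ℝ (Fin d) → A → B → ℝ)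
    (h h' : ℝ → EuclideanSpace ℝ (Fin d) → ℝ) (g : EuclideanSpace ℝ (Fin d) → ℝ)
    (vb : ℝ × EuclideanSpace ℝ (Fin d) → ℝ) : Prop :=
  (∀ x, vb (T, x) ≤ Real.exp T * g x) ∧
  ∀ φ : ℝ × EuclideanSpace ℝ (Fin d) → ℝ, ContDiff ℝ 2 φ →
    ∀ t ∈ Icc (0 : ℝ) T, ∀ x : EuclideanSpace ℝ (Fin d),
      IsLocalMaxOn (fun p => vb p - φ p)
        (Icc (0 : ℝ) T ×ˢ (univ : Set (EuclideanSpace ℝ (Fin d)))) (t, x) →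
      min (vb (t, x) - Real.exp t * h t x)
        (max (-(timeDeriv φ t x) + vb (t, x) - genL σm φ t x -
            Real.exp t * Hstar σm f Γ t x (Real.exp (-t) • mvec (σm t x)ᵀ (spaceGrad φ t x)))
          (vb (t, x) - Real.exp t * h' t x)) ≤ 0

/-- Viscosity supersolution of the transformed double-obstacle equation (★). -/
def IsSupersolStar {d : ℕ} {A B : Type*} (T : ℝ)
    (σm : ℝ → EuclideanSpace ℝ (Fin d) → Matrix (Fin d) (Fin d) ℝ)
    (f : ℝ → EuclideanSpace ℝ (Fin d) → A → B → EuclideanSpace ℝ (Fin d))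
    (Γ : ℝ → EuclideanSpace ℝ (Fin d) → A → B → ℝ)
    (h h' : ℝ → EuclideanSpace ℝ (Fin d) → ℝ) (g : EuclideanSpace ℝ (Fin d) → ℝ)
    (vb : ℝ × EuclideanSpace ℝ (Fin d) → ℝ) : Prop :=
  (∀ x, Real.exp T * g x ≤ vb (T, x)) ∧
  ∀ φ : ℝ × EuclideanSpace ℝ (Fin d) → ℝ, ContDiff ℝ 2 φ →
    ∀ t ∈ Icc (0 : ℝ) T, ∀ x : EuclideanSpace ℝ (Fin d),
      IsLocalMinOn (fun p => vb p - φ p)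
        (Icc (0 : ℝ) T ×ˢ (univ : Set (EuclideanSpace ℝ (Fin d)))) (t, x) →
      0 ≤ min (vb (t, x) - Real.exp t * h t x)
        (max (-(timeDeriv φ t x) + vb (t, x) - genL σm φ t x -
            Real.exp t * Hstar σm f Γ t x (Real.exp (-t) • mvec (σm t x)ᵀ (spaceGrad φ t x)))
          (vb (t, x) - Real.exp t * h' t x))

/-!
Suppose `u - v` is positive somewhere. Subtracting from `u` and adding to `v` a small multiple of
`exp (r * (T - t)) * (1 + ‖x‖²) ^ (m + 2)`, which is a supersolution of the linear equations
governed by constant controls, confines the maximum of `u - v` to a compact cylinder and keeps it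
away from the terminal time. There one doubles the variables with the penalty
`(((t - s) / θ)² + ‖x - y‖²) / (2 * τ)`. As the coefficients are Lipschitz in space but only
continuous in time, `θ` is chosen so small that the time increments are `o(τ)` at the maximum.

The theorem on sums is obtained by regularising: the sup-convolutions of `u` and `-v` are touched
from above by a Lasry–Lions sup-inf-convolution, which is `C^{1,1}`. Its gradient is therefore
Lipschitz, and Rademacher's theorem replaces Alexandrov's in Jensen's argument for finding maximum
points of perturbations at which second derivatives exist.

The columns of `σ (t, x)` and `σ (s, y)` are bases, so a linear map carries one to the other.
Testing the two Hessians along vectors related by this map bounds the difference of the second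
order terms by `‖σ (t, x) - σ (s, y)‖² / τ` and small errors. The two operators then differ by less
than `u (t, x) - v (s, y)`, and so do the values of each obstacle, which is a contradiction.
-/

section ProximalSubgradients

variable {E : Type*} [NormedAddCommGroup E] [InnerProductSpace ℝ E]

theorem mul_div_add_mul_norm_add_sq_le {k l : ℝ} (hk : 0 < k) (hl : 0 < l) (a b : E) :
    k * l / (k + l) * ‖a + b‖ ^ 2 ≤ l * ‖a‖ ^ 2 + k * ‖b‖ ^ 2 := by
  have hsq : 0 ≤ ‖l • a - k • b‖ ^ 2 := by positivity
  rw [norm_sub_sq_real, norm_smul, norm_smul, real_inner_smul_left, real_inner_smul_right,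
    Real.norm_of_nonneg hk.le, Real.norm_of_nonneg hl.le] at hsq
  rw [norm_add_sq_real, div_mul_eq_mul_div, div_le_iff₀ (by positivity)]
  nlinarith

theorem exists_mul_norm_sub_sq_add_eq {k l : ℝ} (hk : 0 < k) (hl : 0 < l) (y z : E) :
    ∃ x : E, l * ‖x - y‖ ^ 2 + k * ‖x - z‖ ^ 2 = k * l / (k + l) * ‖y - z‖ ^ 2 := by
  refine ⟨y + (k / (k + l)) • (z - y), ?_⟩
  have hy : y + (k / (k + l)) • (z - y) - y = (k / (k + l)) • (z - y) := by abel
  have hz : y + (k / (k + l)) • (z - y) - z = (-(l / (k + l))) • (z - y) := by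
    have : l / (k + l) = 1 - k / (k + l) := by field_simp; ring
    rw [this]
    module
  rw [hy, hz, norm_smul, norm_smul, mul_pow, mul_pow, Real.norm_eq_abs, Real.norm_eq_abs, sq_abs,
    sq_abs, norm_sub_rev z y]
  field_simp

theorem half_mul_norm_sub_sq_le {k : ℝ} (hk : 0 < k) (x z w : E) :
    k / 2 * ‖z - w‖ ^ 2 ≤ k * ‖x - z‖ ^ 2 + k * ‖x - w‖ ^ 2 := by
  have h := mul_div_add_mul_norm_add_sq_le hk hk (z - x) (x - w)
  rw [sub_add_sub_cancel, norm_sub_rev z x] at h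
  convert h using 2
  field_simp
  norm_num

theorem norm_le_of_forall_inner_le {C : ℝ} (hC : 0 ≤ C) {D x y : E}
    (h : ∀ z, ⟪D, z - y⟫_ℝ ≤ C * (‖z - x‖ ^ 2 + ‖z - y‖ ^ 2 + ‖x - y‖ ^ 2)) :
    ‖D‖ ≤ 6 * C * ‖x - y‖ := by
  rcases eq_or_ne D 0 with rfl | hD
  · rw [norm_zero]
    positivity
  have hD : 0 < ‖D‖ := norm_pos_iff.mpr hD
  refine le_of_forall_pos_le_add fun ε hε => ?_
  -- test in the direction of `D`, at a distance `s` slightly larger than `‖x - y‖`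
  obtain ⟨s, hs⟩ : ∃ s, s = ‖x - y‖ + ε / (6 * C + 1) := ⟨_, rfl⟩
  have hsr : ‖x - y‖ ≤ s := by rw [hs]; exact le_add_of_nonneg_right (by positivity)
  have hs0 : 0 < s := by rw [hs]; positivity
  have hnorm : ‖(s / ‖D‖) • D‖ = s := by
    rw [norm_smul, Real.norm_of_nonneg (by positivity), div_mul_cancel₀ _ hD.ne']
  have hz := h (y + (s / ‖D‖) • D)
  have hzx : ‖y + (s / ‖D‖) • D - x‖ ≤ 2 * s := by
    rw [show y + (s / ‖D‖) • D - x = (s / ‖D‖) • D - (x - y) by abel]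
    exact (norm_sub_le _ _).trans (by linarith)
  have hzx' : ‖y + (s / ‖D‖) • D - x‖ ^ 2 ≤ (2 * s) ^ 2 := by gcongr
  have hxy : ‖x - y‖ ^ 2 ≤ s ^ 2 := by gcongr
  rw [add_sub_cancel_left, hnorm, real_inner_smul_right, real_inner_self_eq_norm_sq,
    show s / ‖D‖ * ‖D‖ ^ 2 = s * ‖D‖ by field_simp] at hz
  have hDs : s * ‖D‖ ≤ s * (6 * C * s) := hz.trans (by nlinarith)
  calc ‖D‖ ≤ 6 * C * s := le_of_mul_le_mul_left hDs hs0
    _ = 6 * C * ‖x - y‖ + 6 * C / (6 * C + 1) * ε := by rw [hs]; ring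
    _ ≤ 6 * C * ‖x - y‖ + ε := by
        gcongr
        refine mul_le_of_le_one_left hε.le ?_
        rw [div_le_one (by positivity)]
        linarith

theorem eq_zero_of_forall_inner_le_norm_sq {v : E} {C : ℝ} (h : ∀ ξ, ⟪v, ξ⟫_ℝ ≤ C * ‖ξ‖ ^ 2) :
    v = 0 := by
  refine norm_le_zero_iff.mp ((norm_le_of_forall_inner_le (abs_nonneg C) (x := 0) (y := 0)
    fun z => ?_).trans (by simp))
  rw [sub_zero]
  calc ⟪v, z⟫_ℝ ≤ |C| * ‖z‖ ^ 2 := (h z).trans (by gcongr; exact le_abs_self C)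
    _ ≤ |C| * (‖z‖ ^ 2 + ‖z‖ ^ 2 + ‖(0 : E) - 0‖ ^ 2) := by
      gcongr
      nlinarith [sq_nonneg ‖z‖, sq_nonneg ‖(0 : E) - 0‖]

/-- `v` is a proximal subgradient of `F` at `x`: globally, `F` lies above the concave paraboloid
of opening `c` with value `F x` and gradient `v` at `x`. -/
def IsProxSubgrad (c : ℝ) (F : E → ℝ) (x v : E) : Prop :=
  ∀ ξ, F x + ⟪v, ξ⟫_ℝ - c * ‖ξ‖ ^ 2 ≤ F (x + ξ)

theorem IsProxSubgrad.add {c c' : ℝ} {F F' : E → ℝ} {x v v' : E} (h : IsProxSubgrad c F x v)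
    (h' : IsProxSubgrad c' F' x v') : IsProxSubgrad (c + c') (fun y => F y + F' y) x (v + v') := by
  intro ξ
  have := add_le_add (h ξ) (h' ξ)
  rw [inner_add_left]
  linarith

theorem IsProxSubgrad.eq_zero_of_isMax {c : ℝ} {F : E → ℝ} {x v : E} (h : IsProxSubgrad c F x v)
    (hmax : ∀ y, F y ≤ F x) : v = 0 :=
  eq_zero_of_forall_inner_le_norm_sq (C := c) fun ξ => by linarith [h ξ, hmax (x + ξ)]

/-- `A` is of class `C^{1,1}` with gradient `G`, expressed by a uniform quadratic bound for its
first order Taylor remainder. -/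
def IsC11With (C : ℝ) (A : E → ℝ) (G : E → E) : Prop :=
  ∀ x ξ, |A (x + ξ) - A x - ⟪G x, ξ⟫_ℝ| ≤ C * ‖ξ‖ ^ 2

theorem IsProxSubgrad.eq_of_le_of_eq {c C : ℝ} {F A : E → ℝ} {G : E → E} {x v : E}
    (h : IsProxSubgrad c F x v) (hA : IsC11With C A G) (hle : ∀ y, F y ≤ A y) (heq : F x = A x) :
    G x = v := by
  refine (sub_eq_zero.mp (eq_zero_of_forall_inner_le_norm_sq (C := C + c) fun ξ => ?_)).symm
  have hup := (abs_le.mp (hA x ξ)).2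
  rw [inner_sub_left]
  linarith [h ξ, hle (x + ξ)]

theorem IsC11With.lipschitzWith {C : ℝ} (hC : 0 ≤ C) {A : E → ℝ} {G : E → E}
    (h : IsC11With C A G) : LipschitzWith (Real.toNNReal (6 * C)) G := by
  refine LipschitzWith.of_dist_le_mul fun x y => ?_
  rw [dist_eq_norm, dist_eq_norm, Real.coe_toNNReal _ (by positivity)]
  refine norm_le_of_forall_inner_le hC fun z => ?_
  have hz := (abs_le.mp (h x (z - x))).1
  have hz' := (abs_le.mp (h y (z - y))).2
  have hy := (abs_le.mp (h x (y - x))).2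
  rw [add_sub_cancel] at hz hz' hy
  have hsplit : ⟪G x - G y, z - y⟫_ℝ = ⟪G x, z - x⟫_ℝ - ⟪G x, y - x⟫_ℝ - ⟪G y, z - y⟫_ℝ := by
    rw [← inner_sub_right, sub_sub_sub_cancel_right, inner_sub_left]
  rw [norm_sub_rev y x] at hy
  rw [hsplit]
  linarith

theorem IsC11With.hasDerivAt_line {C : ℝ} {A : E → ℝ} {G : E → E} (h : IsC11With C A G)
    (x ξ : E) (r : ℝ) : HasDerivAt (fun r : ℝ => A (x + r • ξ)) ⟪G (x + r • ξ), ξ⟫_ℝ r := by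
  rw [hasDerivAt_iff_isLittleO_nhds_zero]
  have hO : (fun s : ℝ => A (x + (r + s) • ξ) - A (x + r • ξ) - s • ⟪G (x + r • ξ), ξ⟫_ℝ)
      =O[nhds 0] fun s : ℝ => s ^ 2 := by
    refine Asymptotics.IsBigO.of_bound (C * ‖ξ‖ ^ 2) (Filter.Eventually.of_forall fun s => ?_)
    have hs := h (x + r • ξ) (s • ξ)
    rw [real_inner_smul_right, norm_smul, mul_pow] at hs
    rw [add_smul, ← add_assoc, Real.norm_eq_abs, smul_eq_mul, norm_pow]
    linarith
  refine hO.trans_isLittleO ?_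
  simpa only [id_eq] using Asymptotics.isLittleO_pow_id (𝕜 := ℝ) (n := 2) (by norm_num)

theorem IsC11With.eventually_abs_taylor_two_le {C : ℝ} {A : E → ℝ} {G : E → E}
    (h : IsC11With C A G) {x : E} {X : E →L[ℝ] E} (hX : HasFDerivAt G X x) {ε : ℝ} (hε : 0 < ε) :
    ∀ᶠ ξ in nhds (0 : E),
      |A (x + ξ) - A x - ⟪G x, ξ⟫_ℝ - 1 / 2 * ⟪X ξ, ξ⟫_ℝ| ≤ ε * ‖ξ‖ ^ 2 := by
  obtain ⟨ρ, hρ, hball⟩ := Metric.eventually_nhds_iff_ball.mp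
    ((hasFDerivAt_iff_isLittleO_nhds_zero.mp hX).def hε)
  filter_upwards [Metric.ball_mem_nhds (0 : E) hρ] with ξ hξ
  rw [mem_ball_zero_iff] at hξ
  have key := norm_image_sub_le_of_norm_deriv_le_segment_01' (E := ℝ)
    (f := fun r : ℝ => A (x + r • ξ) - r * ⟪G x, ξ⟫_ℝ - r ^ 2 / 2 * ⟪X ξ, ξ⟫_ℝ)
    (f' := fun r : ℝ => ⟪G (x + r • ξ), ξ⟫_ℝ - ⟪G x, ξ⟫_ℝ - r * ⟪X ξ, ξ⟫_ℝ)
    (C := ε * ‖ξ‖ ^ 2) (fun r _ => ?_) (fun r hr => ?_)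
  · simp only [one_smul, zero_smul, add_zero, Real.norm_eq_abs] at key
    convert key using 2
    ring
  · have hlin : HasDerivAt (fun r : ℝ => r * ⟪G x, ξ⟫_ℝ) ⟪G x, ξ⟫_ℝ r := by
      simpa using (hasDerivAt_id r).mul_const ⟪G x, ξ⟫_ℝ
    have hquad : HasDerivAt (fun r : ℝ => r ^ 2 / 2 * ⟪X ξ, ξ⟫_ℝ) (r * ⟪X ξ, ξ⟫_ℝ) r :=
      (((hasDerivAt_pow 2 r).div_const 2).mul_const ⟪X ξ, ξ⟫_ℝ).congr_deriv (by norm_num)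
    exact (((h.hasDerivAt_line x ξ r).sub hlin).sub hquad).hasDerivWithinAt
  · have hr1 : ‖r • ξ‖ ≤ ‖ξ‖ := by
      rw [norm_smul, Real.norm_of_nonneg hr.1]
      exact mul_le_of_le_one_left (norm_nonneg _) hr.2.le
    have hG := hball (r • ξ) (mem_ball_zero_iff.mpr (hr1.trans_lt hξ))
    have hinner : ⟪G (x + r • ξ), ξ⟫_ℝ - ⟪G x, ξ⟫_ℝ - r * ⟪X ξ, ξ⟫_ℝ =
        ⟪G (x + r • ξ) - G x - X (r • ξ), ξ⟫_ℝ := by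
      rw [inner_sub_left, inner_sub_left, map_smul, real_inner_smul_left]
    rw [hinner]
    refine (norm_inner_le_norm _ _).trans ?_
    rw [sq, ← mul_assoc]
    gcongr
    exact hG.trans (by gcongr)

end ProximalSubgradients

section SupConvolution

variable {E : Type*} [NormedAddCommGroup E]
variable {K : Set E} {U : E → ℝ} {m k l : ℝ}

/-- The quadratic sup-convolution `y ↦ sup_{z ∈ K} (U z - m ‖y - z‖²)` of `U` over `K`. -/
def supConv (K : Set E) (U : E → ℝ) (m : ℝ) (y : E) : ℝ :=
  sSup ((fun z => U z - m * ‖y - z‖ ^ 2) '' K)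

theorem exists_supConv_eq (hK : IsCompact K) (hne : K.Nonempty) (hU : ContinuousOn U K) (m : ℝ)
    (y : E) : ∃ z ∈ K, supConv K U m y = U z - m * ‖y - z‖ ^ 2 :=
  hK.exists_sSup_image_eq hne (hU.sub (by fun_prop))

theorem le_supConv (hK : IsCompact K) (hU : ContinuousOn U K) (m : ℝ) (y : E) {z : E}
    (hz : z ∈ K) : U z - m * ‖y - z‖ ^ 2 ≤ supConv K U m y :=
  le_csSup (hK.bddAbove_image (hU.sub (by fun_prop))) (mem_image_of_mem _ hz)

theorem continuous_supConv (hK : IsCompact K) (hU : ContinuousOn U K) (m : ℝ) :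
    Continuous (supConv K U m) := by
  have : CompactSpace K := isCompact_iff_compactSpace.mp hK
  have hU' : Continuous fun z : K => U z := continuousOn_iff_continuous_domRestrict.mp hU
  have hjoint : Continuous ↿(fun (y : E) (z : K) => U z - m * ‖y - z‖ ^ 2) :=
    (hU'.comp continuous_snd).sub (by fun_prop)
  convert isCompact_univ.continuous_sSup hjoint using 3
  rw [image_univ, supConv, image_eq_range]

variable [InnerProductSpace ℝ E]

theorem isProxSubgrad_supConv (hK : IsCompact K) (hU : ContinuousOn U K) {y z : E} (hz : z ∈ K)
    (hyz : supConv K U m y = U z - m * ‖y - z‖ ^ 2) :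
    IsProxSubgrad m (supConv K U m) y ((2 * m) • (z - y)) := by
  intro ξ
  have h := le_supConv hK hU m (y + ξ) hz
  rw [show y + ξ - z = (y - z) + ξ by abel, norm_add_sq_real] at h
  rw [hyz, real_inner_smul_left, ← neg_sub y z, inner_neg_left]
  linarith

theorem exists_isMin_supConv_add [FiniteDimensional ℝ E] (hK : IsCompact K) (hne : K.Nonempty)
    (hU : ContinuousOn U K) (hm : 0 ≤ m) (hml : m < l) (x : E) :
    ∃ y, ∀ y', supConv K U m y + l * ‖x - y‖ ^ 2 ≤ supConv K U m y' + l * ‖x - y'‖ ^ 2 := by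
  obtain ⟨z₀, hz₀⟩ := hne
  have hcont := continuous_supConv hK hU m
  refine (by fun_prop : Continuous fun y => supConv K U m y + l * ‖x - y‖ ^ 2).exists_forall_le ?_
  have hlow : ∀ y, (U z₀ - m * ‖z₀‖ ^ 2) +
      ‖y‖ * ((l - m) * ‖y‖ + -(2 * l * ‖x‖ + 2 * m * ‖z₀‖)) ≤
        supConv K U m y + l * ‖x - y‖ ^ 2 := by
    intro y
    have hsup := le_supConv hK hU m y hz₀
    have hyz : ‖y - z₀‖ ^ 2 ≤ (‖y‖ + ‖z₀‖) ^ 2 := by gcongr; exact norm_sub_le _ _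
    have hxy : ‖y‖ ^ 2 - 2 * ‖x‖ * ‖y‖ ≤ ‖x - y‖ ^ 2 := by
      rw [norm_sub_sq_real]
      nlinarith [sq_nonneg ‖x‖, real_inner_le_norm x y]
    have hyz' := mul_le_mul_of_nonneg_left hyz hm
    have hxy' := mul_le_mul_of_nonneg_left hxy (hm.trans hml.le)
    nlinarith
  refine Filter.tendsto_atTop_mono hlow (Filter.tendsto_atTop_add_const_left _ _ ?_)
  have hnorm := tendsto_norm_cocompact_atTop (E := E)
  exact hnorm.atTop_mul_atTop₀
    (Filter.tendsto_atTop_add_const_right _ _ (hnorm.const_mul_atTop (sub_pos.mpr hml)))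

theorem isC11With_of_le_of_midpoint_le {A : E → ℝ} {G : E → E} (hk : 0 ≤ k)
    (hup : ∀ x ξ, A (x + ξ) ≤ A x + ⟪G x, ξ⟫_ℝ + l * ‖ξ‖ ^ 2)
    (hmid : ∀ x ξ, 2 * A x ≤ A (x + ξ) + A (x - ξ) + 2 * k * ‖ξ‖ ^ 2) :
    IsC11With (l + 2 * k) A G := by
  intro x ξ
  have h₁ := hup x ξ
  have h₂ := hup x (-ξ)
  have h₃ := hmid x ξ
  rw [inner_neg_right, norm_neg, ← sub_eq_add_neg] at h₂
  rw [abs_le]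
  constructor <;> linarith [mul_nonneg hk (sq_nonneg ‖ξ‖)]

-- The value `m = k l / (k + l)` is such that inf-convolving the `m`-sup-convolution with opening
-- `l` gives a regularisation of the `k`-sup-convolution.
theorem two_mul_le_of_forall_le_supConv_add (hK : IsCompact K) (hne : K.Nonempty)
    (hU : ContinuousOn U K) (hk : 0 < k) (hl : 0 < l) {x ξ y₁ y₂ : E} {a : ℝ}
    (ha : ∀ y, a ≤ supConv K U (k * l / (k + l)) y + l * ‖x - y‖ ^ 2) :
    2 * a ≤ (supConv K U (k * l / (k + l)) y₁ + l * ‖x + ξ - y₁‖ ^ 2) +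
      (supConv K U (k * l / (k + l)) y₂ + l * ‖x - ξ - y₂‖ ^ 2) + 2 * k * ‖ξ‖ ^ 2 := by
  obtain ⟨y, hy⟩ : ∃ y, y = (1 / 2 : ℝ) • (y₁ + y₂) := ⟨_, rfl⟩
  obtain ⟨ζ, hζ⟩ : ∃ ζ, ζ = (1 / 2 : ℝ) • (y₁ - y₂) := ⟨_, rfl⟩
  have hy₁ : y₁ = y + ζ := by rw [hy, hζ]; module
  have hy₂ : y₂ = y - ζ := by rw [hy, hζ]; module
  obtain ⟨z, hz, hyz⟩ := exists_supConv_eq hK hne hU (k * l / (k + l)) y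
  have h₁ := le_supConv hK hU (k * l / (k + l)) y₁ hz
  have h₂ := le_supConv hK hU (k * l / (k + l)) y₂ hz
  have hquad := mul_div_add_mul_norm_add_sq_le hk hl (ζ - ξ) ξ
  rw [sub_add_cancel] at hquad
  have hpar := parallelogram_law_with_norm ℝ (y - z) ζ
  have hpar' := parallelogram_law_with_norm ℝ (x - y) (ζ - ξ)
  rw [hy₁, show y + ζ - z = y - z + ζ by abel] at h₁
  rw [hy₂, show y - ζ - z = y - z - ζ by abel] at h₂
  rw [hy₁, hy₂, show x + ξ - (y + ζ) = x - y - (ζ - ξ) by abel,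
    show x - ξ - (y - ζ) = x - y + (ζ - ξ) by abel]
  linear_combination 2 * ha y + 2 * hyz + h₁ + h₂ + 2 * hquad + (k * l / (k + l)) * hpar - l * hpar'

/-- `A` is a `C^{1,1}` majorant of `P` with gradient `G`, so tight that it stays below every convex
paraboloid of opening `l` lying above `P`. -/
structure IsParaboloidEnvelope (C l : ℝ) (P A : E → ℝ) (G : E → E) : Prop where
  isC11With : IsC11With C A G
  le : ∀ x, P x ≤ A x
  le_paraboloid : ∀ e y, (∀ x, P x ≤ e + l * ‖x - y‖ ^ 2) → ∀ x, A x ≤ e + l * ‖x - y‖ ^ 2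

-- The Lasry–Lions regularisation: `A x = inf_y (supConv K U (k l / (k + l)) y + l ‖x - y‖²)`.
theorem exists_isParaboloidEnvelope_supConv [FiniteDimensional ℝ E] (hK : IsCompact K)
    (hne : K.Nonempty) (hU : ContinuousOn U K) (hk : 0 < k) (hl : 0 < l) :
    ∃ (A : E → ℝ) (G : E → E), IsParaboloidEnvelope (l + 2 * k) l (supConv K U k) A G := by
  obtain ⟨m, hm⟩ : ∃ m, m = k * l / (k + l) := ⟨_, rfl⟩
  have hm0 : 0 < m := by rw [hm]; positivity
  have hml : m < l := by
    rw [hm, div_lt_iff₀ (by positivity)]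
    nlinarith
  choose Y hY using exists_isMin_supConv_add hK hne hU hm0.le hml
  refine ⟨fun x => supConv K U m (Y x) + l * ‖x - Y x‖ ^ 2, fun x => (2 * l) • (x - Y x),
    isC11With_of_le_of_midpoint_le hk.le (fun x ξ => (hY (x + ξ) (Y x)).trans_eq ?_)
      (fun x ξ => ?_), fun x => ?_, fun e y h x => ?_⟩
  · rw [show x + ξ - Y x = (x - Y x) + ξ by abel, norm_add_sq_real, real_inner_smul_left]
    ring
  · subst hm
    exact two_mul_le_of_forall_le_supConv_add hK hne hU hk hl (hY x)
  · obtain ⟨z, hz, hxz⟩ := exists_supConv_eq hK hne hU k x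
    have hquad := mul_div_add_mul_norm_add_sq_le hk hl (Y x - x) (x - z)
    rw [← hm, sub_add_sub_cancel, norm_sub_rev (Y x) x] at hquad
    linarith [le_supConv hK hU m (Y x) hz]
  · obtain ⟨z, hz, hyz⟩ := exists_supConv_eq hK hne hU m y
    obtain ⟨x', hx'⟩ := exists_mul_norm_sub_sq_add_eq hk hl y z
    rw [← hm] at hx'
    linarith [h x', le_supConv hK hU k x' hz, hY x y]

end SupConvolution

section PerturbedMaxima

variable {E : Type*} [NormedAddCommGroup E] [InnerProductSpace ℝ E]
variable {F : E → ℝ} {x₀ : E} {c δ : ℝ}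

/-- `F` perturbed by a concave paraboloid centred at `x₀` and by a linear form with gradient
`-p`. -/
def perturb (F : E → ℝ) (x₀ : E) (δ : ℝ) (p x : E) : ℝ :=
  F x - δ / 2 * ‖x - x₀‖ ^ 2 - ⟪p, x - x₀⟫_ℝ

theorem perturb_self (p : E) : perturb F x₀ δ p x₀ = F x₀ := by
  simp [perturb]

theorem perturb_le (hmax : ∀ x, F x ≤ F x₀) (p x : E) :
    perturb F x₀ δ p x ≤ F x₀ + ‖x - x₀‖ * (‖p‖ - δ / 2 * ‖x - x₀‖) := by
  have hinner : -⟪p, x - x₀⟫_ℝ ≤ ‖p‖ * ‖x - x₀‖ :=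
    (neg_le_abs _).trans (abs_real_inner_le_norm _ _)
  rw [perturb]
  nlinarith [hmax x]

theorem exists_isMax_perturb [FiniteDimensional ℝ E] (hF : Continuous F)
    (hmax : ∀ x, F x ≤ F x₀) (hδ : 0 < δ) (p : E) :
    ∃ x, ∀ y, perturb F x₀ δ p y ≤ perturb F x₀ δ p x := by
  have hcont : Continuous (perturb F x₀ δ p) :=
    (hF.sub (by fun_prop)).sub (by fun_prop)
  obtain ⟨x, -, hx⟩ := (isCompact_closedBall x₀ (2 * ‖p‖ / δ)).exists_isMaxOn
    (Metric.nonempty_closedBall.mpr (by positivity)) hcont.continuousOn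
  refine ⟨x, fun y => ?_⟩
  by_cases hy : y ∈ Metric.closedBall x₀ (2 * ‖p‖ / δ)
  · exact hx hy
  · rw [Metric.mem_closedBall, dist_eq_norm, not_le, div_lt_iff₀ hδ] at hy
    calc perturb F x₀ δ p y ≤ F x₀ + ‖y - x₀‖ * (‖p‖ - δ / 2 * ‖y - x₀‖) := perturb_le hmax p y
      _ ≤ F x₀ := add_le_of_nonpos_right
          (mul_nonpos_of_nonneg_of_nonpos (norm_nonneg _) (by linarith))
      _ = perturb F x₀ δ p x₀ := (perturb_self p).symm
      _ ≤ perturb F x₀ δ p x := hx (Metric.mem_closedBall_self (by positivity))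

theorem mul_norm_sub_le_of_isMax_perturb (hmax : ∀ x, F x ≤ F x₀) {p x : E}
    (hx : ∀ y, perturb F x₀ δ p y ≤ perturb F x₀ δ p x) : δ * ‖x - x₀‖ ≤ 2 * ‖p‖ := by
  by_contra! hlt
  have hpos : 0 < ‖x - x₀‖ := (norm_nonneg _).lt_of_ne' fun h => by
    rw [h, mul_zero] at hlt
    linarith [norm_nonneg p]
  have hneg : ‖x - x₀‖ * (‖p‖ - δ / 2 * ‖x - x₀‖) < 0 :=
    mul_neg_of_pos_of_neg hpos (by linarith)
  linarith [hx x₀, perturb_self (F := F) (x₀ := x₀) (δ := δ) p, perturb_le (δ := δ) hmax p x]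

theorem IsProxSubgrad.isProxSubgrad_perturb {x v : E} (hv : IsProxSubgrad c F x v) (p : E) :
    IsProxSubgrad (c + δ / 2) (perturb F x₀ δ p) x (v - δ • (x - x₀) - p) := by
  intro ξ
  have h := hv ξ
  simp only [perturb]
  rw [show x + ξ - x₀ = (x - x₀) + ξ by abel, norm_add_sq_real, inner_add_right, inner_sub_left,
    inner_sub_left, real_inner_smul_left]
  linarith

theorem IsProxSubgrad.eq_of_isMax_perturb {p x v : E} (hv : IsProxSubgrad c F x v)
    (hx : ∀ y, perturb F x₀ δ p y ≤ perturb F x₀ δ p x) :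
    v = δ • (x - x₀) + p := by
  rw [← sub_eq_zero, ← (hv.isProxSubgrad_perturb p).eq_zero_of_isMax hx]
  abel

theorem norm_sub_le_of_isMax_perturb (hc : 0 ≤ c) (hδ : 0 ≤ δ) {p p' x y v : E}
    (hv : IsProxSubgrad c F x v)
    (hx : ∀ z, perturb F x₀ δ p z ≤ perturb F x₀ δ p x)
    (hy : ∀ z, perturb F x₀ δ p' z ≤ perturb F x₀ δ p' y) :
    ‖p - p'‖ ≤ 6 * (c + δ / 2) * ‖x - y‖ := by
  have hprox := hv.isProxSubgrad_perturb (x₀ := x₀) (δ := δ) p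
  rw [hprox.eq_zero_of_isMax hx] at hprox
  refine norm_le_of_forall_inner_le (by positivity) fun z => ?_
  have hz := hprox (z - x)
  rw [inner_zero_left, add_sub_cancel] at hz
  have hinner : ⟪p - p', z - y⟫_ℝ = ⟪p - p', z - x₀⟫_ℝ - ⟪p - p', y - x₀⟫_ℝ := by
    rw [← inner_sub_right, sub_sub_sub_cancel_right]
  have hle : ⟪p - p', z - y⟫_ℝ ≤ (c + δ / 2) * ‖z - x‖ ^ 2 := by
    have hxy := hx y
    have hyz := hy z
    rw [hinner, inner_sub_left, inner_sub_left]
    simp only [perturb] at hz hxy hyz ⊢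
    linarith
  refine hle.trans ?_
  gcongr
  nlinarith [sq_nonneg ‖z - y‖, sq_nonneg ‖x - y‖]

-- By Rademacher the exceptional set of `G` is null, and Lipschitz maps preserve null sets.
theorem exists_mem_differentiableAt_of_ball_subset_image {E' : Type*} [NormedAddCommGroup E']
    [NormedSpace ℝ E'] [FiniteDimensional ℝ E'] [FiniteDimensional ℝ E] {C C' : NNReal} {G : E → E'}
    (hG : LipschitzWith C G) {S : Set E} {P : E → E} (hP : LipschitzOnWith C' P S) {a : E} {r : ℝ}
    (hr : 0 < r) (hball : Metric.ball a r ⊆ P '' S) : ∃ x ∈ S, DifferentiableAt ℝ G x := by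
  by_contra! hnot
  let _ : MeasurableSpace E := borel E
  have : BorelSpace E := ⟨rfl⟩
  let μ := MeasureTheory.Measure.hausdorffMeasure (X := E) (Module.finrank ℝ E)
  have hS : μ S = 0 :=
    MeasureTheory.measure_mono_null hnot (MeasureTheory.ae_iff.mp (hG.ae_differentiableAt (μ := μ)))
  have himage : μ (P '' S) ≤ 0 := by
    simpa only [μ, hS, mul_zero] using
      hP.hausdorffMeasure_image_le (d := Module.finrank ℝ E) (by positivity)
  exact (Metric.measure_ball_pos μ a hr).ne'
    (MeasureTheory.measure_mono_null hball (nonpos_iff_eq_zero.mp himage))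

theorem exists_isMax_perturb_differentiableAt [FiniteDimensional ℝ E] (hF : Continuous F)
    (hmax : ∀ x, F x ≤ F x₀) (hc : 0 ≤ c) (hprox : ∀ x, ∃ v, IsProxSubgrad c F x v) {C : NNReal}
    {G : E → E} (hG : LipschitzWith C G) (hδ : 0 < δ) {r : ℝ} (hr : 0 < r) :
    ∃ x p, ‖p‖ ≤ r ∧ (∀ y, perturb F x₀ δ p y ≤ perturb F x₀ δ p x) ∧ DifferentiableAt ℝ G x := by
  let S : Set E := {x | ∃ p, ‖p‖ ≤ r ∧ ∀ y, perturb F x₀ δ p y ≤ perturb F x₀ δ p x}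
  choose! P hPS using fun x (hx : x ∈ S) => hx
  choose V hV using hprox
  have hP : LipschitzOnWith (Real.toNNReal (6 * (c + δ / 2))) P S := by
    refine LipschitzOnWith.of_dist_le_mul fun x hx y hy => ?_
    rw [dist_eq_norm, dist_eq_norm, Real.coe_toNNReal _ (by positivity)]
    exact norm_sub_le_of_isMax_perturb hc hδ.le (hV x) (hPS x hx).2 (hPS y hy).2
  have hball : Metric.ball (0 : E) r ⊆ P '' S := by
    intro p hp
    obtain ⟨x, hx⟩ := exists_isMax_perturb hF hmax hδ p
    have hxS : x ∈ S := ⟨p, (mem_ball_zero_iff.mp hp).le, hx⟩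
    refine ⟨x, hxS, sub_eq_zero.mp (norm_le_zero_iff.mp ?_)⟩
    simpa only [sub_self, norm_zero, mul_zero] using
      norm_sub_le_of_isMax_perturb hc hδ.le (hV x) (hPS x hxS).2 hx
  obtain ⟨x, ⟨p, hp, hx⟩, hdiff⟩ := exists_mem_differentiableAt_of_ball_subset_image hG hP hr hball
  exact ⟨x, p, hp, hx, hdiff⟩

end PerturbedMaxima

section Jets

variable {Z : Type*} [NormedAddCommGroup Z]

theorem tendsto_sub_nhdsWithin (K : Set Z) (z : Z) :
    Filter.Tendsto (fun z' => z' - z) (nhdsWithin z K) (nhds 0) :=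
  tendsto_nhdsWithin_of_tendsto_nhds ((continuous_sub_right z).tendsto' z 0 (sub_self z))

variable [NormedSpace ℝ Z]

/-- `(ℓ, B)` is a second order superjet of `U` at `z` relative to `K`. The quadratic part is
`B ζ ζ`, without the customary factor `1 / 2`, and there is no `o(‖ζ‖²)` error. -/
def HasSuperjetWithin (K : Set Z) (U : Z → ℝ) (z : Z) (ℓ : Z →L[ℝ] ℝ) (B : Z →L[ℝ] Z →L[ℝ] ℝ) :
    Prop :=
  ∀ᶠ z' in nhdsWithin z K, U z' ≤ U z + ℓ (z' - z) + B (z' - z) (z' - z)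

/-- `(ℓ, B)` is a second order subjet of `V` at `w` relative to `K`, with the conventions of
`HasSuperjetWithin`. -/
def HasSubjetWithin (K : Set Z) (V : Z → ℝ) (w : Z) (ℓ : Z →L[ℝ] ℝ) (B : Z →L[ℝ] Z →L[ℝ] ℝ) :
    Prop :=
  ∀ᶠ w' in nhdsWithin w K, V w + ℓ (w' - w) + B (w' - w) (w' - w) ≤ V w'

variable {E : Type*} [NormedAddCommGroup E] [NormedSpace ℝ E]

theorem tendsto_comp_nhdsWithin_image (e : Z ≃L[ℝ] E) (K : Set Z) (z : E) :
    Filter.Tendsto e (nhdsWithin (e.symm z) K) (nhdsWithin z (e '' K)) := by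
  have h := e.continuous.continuousWithinAt (x := e.symm z) (s := K)
  simpa only [e.apply_symm_apply] using h.tendsto_nhdsWithin (mapsTo_image e K)

theorem HasSuperjetWithin.of_symm {K : Set Z} {U : Z → ℝ} {z : E} {ℓ : E →L[ℝ] ℝ}
    {B : E →L[ℝ] E →L[ℝ] ℝ} (e : Z ≃L[ℝ] E) (h : HasSuperjetWithin (e '' K) (U ∘ e.symm) z ℓ B) :
    HasSuperjetWithin K U (e.symm z) (ℓ.comp (e : Z →L[ℝ] E))
      (B.bilinearComp (e : Z →L[ℝ] E) (e : Z →L[ℝ] E)) := by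
  filter_upwards [(tendsto_comp_nhdsWithin_image e K z).eventually h] with z' hz'
  simpa using hz'

theorem HasSubjetWithin.of_symm {K : Set Z} {V : Z → ℝ} {w : E} {ℓ : E →L[ℝ] ℝ}
    {B : E →L[ℝ] E →L[ℝ] ℝ} (e : Z ≃L[ℝ] E) (h : HasSubjetWithin (e '' K) (V ∘ e.symm) w ℓ B) :
    HasSubjetWithin K V (e.symm w) (ℓ.comp (e : Z →L[ℝ] E))
      (B.bilinearComp (e : Z →L[ℝ] E) (e : Z →L[ℝ] E)) := by
  filter_upwards [(tendsto_comp_nhdsWithin_image e K w).eventually h] with w' hw'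
  simpa using hw'

end Jets

section TheoremOnSums

variable {E : Type*} [NormedAddCommGroup E] [InnerProductSpace ℝ E]
variable {K : Set E} {U V A : E → ℝ} {G : E → E} {X : E →L[ℝ] E} {x₀ x z w p : E}
variable {k δ a C : ℝ}

theorem exists_complete_square (hk : 0 < k) (hδ : 0 < δ) (w x₀ p : E) :
    ∃ (y : E) (c : ℝ), ∀ x, k * ‖x - w‖ ^ 2 + δ / 2 * ‖x - x₀‖ ^ 2 + ⟪p, x - x₀⟫_ℝ =
      c + (k + δ / 2) * ‖x - y‖ ^ 2 := by
  obtain ⟨y, hy⟩ : ∃ y, y = (1 / (k + δ / 2)) • (k • w + (δ / 2) • x₀ - (1 / 2 : ℝ) • p) :=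
    ⟨_, rfl⟩
  refine ⟨y, k * ‖w‖ ^ 2 + δ / 2 * ‖x₀‖ ^ 2 - ⟪p, x₀⟫_ℝ - (k + δ / 2) * ‖y‖ ^ 2, fun x => ?_⟩
  have hxy : (k + δ / 2) * ⟪x, y⟫_ℝ = k * ⟪x, w⟫_ℝ + δ / 2 * ⟪x, x₀⟫_ℝ - 1 / 2 * ⟪p, x⟫_ℝ := by
    rw [hy, real_inner_smul_right, inner_sub_right, inner_add_right, real_inner_smul_right,
      real_inner_smul_right, real_inner_smul_right, real_inner_comm p x]
    field_simp
  rw [norm_sub_sq_real, norm_sub_sq_real, norm_sub_sq_real, inner_sub_right]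
  linear_combination 2 * hxy

theorem IsParaboloidEnvelope.le_of_perturb_le {P Q : E → ℝ}
    (hA : IsParaboloidEnvelope C (k + δ / 2) P A G) (hk : 0 < k) (hδ : 0 < δ) {v : ℝ}
    (hQ : ∀ y, -v - k * ‖y - w‖ ^ 2 ≤ Q y)
    (ha : ∀ y, perturb (fun y => P y + Q y) x₀ δ p y ≤ a) (y : E) :
    A y ≤ a + v + k * ‖y - w‖ ^ 2 + δ / 2 * ‖y - x₀‖ ^ 2 + ⟪p, y - x₀⟫_ℝ := by
  obtain ⟨y', c, hc⟩ := exists_complete_square hk hδ w x₀ p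
  have h := hA.le_paraboloid (a + v + c) y' (fun x => ?_) y
  · linarith [hc y]
  · have hx := ha x
    simp only [perturb] at hx
    linarith [hQ x, hc x]

/-- The bilinear form with diagonal `ξ ↦ (1 / 2) ⟪X ξ, ξ⟫ + ε ‖ξ‖²`: a Hessian `X`, halved to match
the convention for jets, and shifted by `ε`. -/
def shiftedHessForm (X : E →L[ℝ] E) (ε : ℝ) : E →L[ℝ] E →L[ℝ] ℝ :=
  (innerSL ℝ).comp ((1 / 2 : ℝ) • X + ε • ContinuousLinearMap.id ℝ E)

theorem shiftedHessForm_self (X : E →L[ℝ] E) (ε : ℝ) (ξ : E) :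
    shiftedHessForm X ε ξ ξ = 1 / 2 * ⟪X ξ, ξ⟫_ℝ + ε * ‖ξ‖ ^ 2 := by
  simp only [shiftedHessForm, ContinuousLinearMap.comp_apply, innerSL_apply_apply,
    _root_.add_apply, _root_.smul_apply, ContinuousLinearMap.id_apply, inner_add_left,
    real_inner_smul_left, real_inner_self_eq_norm_sq]

/-- The bilinear form with diagonal `η ↦ (1 / 2) ⟪X (L η), L η⟫ - δ ‖L η‖² - k ‖L η - η‖²`. -/
def pulledBackHessForm (X : E →L[ℝ] E) (δ k : ℝ) (L : E →L[ℝ] E) : E →L[ℝ] E →L[ℝ] ℝ :=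
  (shiftedHessForm X (-δ)).bilinearComp L L -
    (shiftedHessForm 0 k).bilinearComp (L - ContinuousLinearMap.id ℝ E)
      (L - ContinuousLinearMap.id ℝ E)

theorem pulledBackHessForm_self (X : E →L[ℝ] E) (δ k : ℝ) (L : E →L[ℝ] E) (η : E) :
    pulledBackHessForm X δ k L η η =
      1 / 2 * ⟪X (L η), L η⟫_ℝ - δ * ‖L η‖ ^ 2 - k * ‖L η - η‖ ^ 2 := by
  simp only [pulledBackHessForm, _root_.sub_apply, ContinuousLinearMap.bilinearComp_apply,
    shiftedHessForm_self, ContinuousLinearMap.id_apply, _root_.zero_apply, inner_zero_left]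
  ring

theorem hasSuperjetWithin_of_le (hA : IsC11With C A G) (hX : HasFDerivAt G X x)
    (hle : ∀ y, ∀ z' ∈ K, U z' ≤ A y + k * ‖y - z'‖ ^ 2) (heq : U z = A x + k * ‖x - z‖ ^ 2)
    (hδ : 0 < δ) :
    HasSuperjetWithin K U z (innerSL ℝ (G x)) (shiftedHessForm X δ) := by
  filter_upwards [(tendsto_sub_nhdsWithin K z).eventually (hA.eventually_abs_taylor_two_le hX hδ),
    self_mem_nhdsWithin] with z' htaylor hz'
  have hup := (abs_le.mp htaylor).2
  have hz := hle (x + (z' - z)) z' hz'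
  rw [show x + (z' - z) - z' = x - z by abel] at hz
  rw [innerSL_apply_apply, shiftedHessForm_self]
  linarith

theorem hasSubjetWithin_of_le (hA : IsC11With C A G) (hX : HasFDerivAt G X x)
    (hle : ∀ y, ∀ w' ∈ K,
      A y ≤ a + V w' + k * ‖y - w'‖ ^ 2 + δ / 2 * ‖y - x₀‖ ^ 2 + ⟪p, y - x₀⟫_ℝ)
    (heq : A x = a + V w + k * ‖x - w‖ ^ 2 + δ / 2 * ‖x - x₀‖ ^ 2 + ⟪p, x - x₀⟫_ℝ)
    (hG : G x = (2 * k) • (x - w) + (δ • (x - x₀) + p)) (hδ : 0 < δ) (L : E →L[ℝ] E) :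
    HasSubjetWithin K V w (innerSL ℝ ((2 * k) • (x - w)))
      (pulledBackHessForm X δ k L) := by
  have htendsto : Filter.Tendsto (fun w' => L (w' - w)) (nhdsWithin w K) (nhds 0) :=
    (L.continuous.tendsto' 0 0 (map_zero L)).comp (tendsto_sub_nhdsWithin K w)
  filter_upwards [htendsto.eventually (hA.eventually_abs_taylor_two_le hX (half_pos hδ)),
    self_mem_nhdsWithin] with w' htaylor hw'
  have hlow := (abs_le.mp htaylor).1
  have hw := hle (x + L (w' - w)) w' hw'
  rw [show x + L (w' - w) - w' = (x - w) + (L (w' - w) - (w' - w)) by abel,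
    show x + L (w' - w) - x₀ = (x - x₀) + L (w' - w) by abel, norm_add_sq_real, norm_add_sq_real,
    inner_add_right, inner_sub_right (x - w)] at hw
  rw [hG, inner_add_left, inner_add_left, real_inner_smul_left, real_inner_smul_left] at hlow
  rw [innerSL_apply_apply, real_inner_smul_left, pulledBackHessForm_self]
  linarith

theorem supConv_add_supConv_neg_le (hK : IsCompact K) (hne : K.Nonempty) (hU : ContinuousOn U K)
    (hV : ContinuousOn V K) (hk : 0 < k)
    (ha : ∀ z ∈ K, ∀ w ∈ K, U z - V w - k / 2 * ‖z - w‖ ^ 2 ≤ a) (x : E) :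
    supConv K U k x + supConv K (-V) k x ≤ a := by
  obtain ⟨z, hz, hxz⟩ := exists_supConv_eq hK hne hU k x
  obtain ⟨w, hw, hxw⟩ := exists_supConv_eq hK hne hV.neg k x
  rw [Pi.neg_apply] at hxw
  linarith [ha z hz w hw, half_mul_norm_sub_sq_le hk x z w]

-- The maximum is attained at the midpoint of a maximising pair.
theorem exists_isMax_supConv_add (hK : IsCompact K) (hne : K.Nonempty) (hU : ContinuousOn U K)
    (hV : ContinuousOn V K) (hk : 0 < k) :
    ∃ x₀, (∀ x, supConv K U k x + supConv K (-V) k x ≤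
        supConv K U k x₀ + supConv K (-V) k x₀) ∧
      ∀ z ∈ K, ∀ w ∈ K, U z - V w - k / 2 * ‖z - w‖ ^ 2 ≤
        supConv K U k x₀ + supConv K (-V) k x₀ := by
  have hcont : ContinuousOn (fun p : E × E => U p.1 - V p.2 - k / 2 * ‖p.1 - p.2‖ ^ 2)
      (K ×ˢ K) :=
    ((hU.comp continuousOn_fst fun p hp => hp.1).sub
      (hV.comp continuousOn_snd fun p hp => hp.2)).sub (by fun_prop)
  obtain ⟨⟨z, w⟩, ⟨hz, hw⟩, hmax⟩ := (hK.prod hK).exists_isMaxOn (hne.prod hne) hcont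
  have hle : ∀ z' ∈ K, ∀ w' ∈ K, U z' - V w' - k / 2 * ‖z' - w'‖ ^ 2 ≤
      supConv K U k ((1 / 2 : ℝ) • (z + w)) + supConv K (-V) k ((1 / 2 : ℝ) • (z + w)) := by
    intro z' hz' w' hw'
    have hU' := le_supConv hK hU k ((1 / 2 : ℝ) • (z + w)) hz
    have hV' := le_supConv hK hV.neg k ((1 / 2 : ℝ) • (z + w)) hw
    rw [show (1 / 2 : ℝ) • (z + w) - z = (-(1 / 2 : ℝ)) • (z - w) by module, norm_smul, mul_pow,
      Real.norm_eq_abs, sq_abs] at hU'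
    rw [show (1 / 2 : ℝ) • (z + w) - w = (1 / 2 : ℝ) • (z - w) by module, norm_smul, mul_pow,
      Real.norm_eq_abs, sq_abs, Pi.neg_apply] at hV'
    have hzw : U z' - V w' - k / 2 * ‖z' - w'‖ ^ 2 ≤ U z - V w - k / 2 * ‖z - w‖ ^ 2 :=
      hmax (mk_mem_prod hz' hw')
    linarith
  exact ⟨_, supConv_add_supConv_neg_le hK hne hU hV hk hle, hle⟩

theorem le_add_of_isMax_perturb {F : E → ℝ} (hδ : 0 < δ) (hmax : ∀ x, F x ≤ F x₀)
    (hp : ‖p‖ ≤ δ / 3) (hx : ∀ y, perturb F x₀ δ p y ≤ perturb F x₀ δ p x) : F x₀ ≤ F x + δ := by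
  have hdist : δ * ‖x - x₀‖ ≤ δ * (2 / 3) := by
    linarith [mul_norm_sub_le_of_isMax_perturb hmax hx]
  have hdist' : ‖x - x₀‖ ≤ 2 / 3 := le_of_mul_le_mul_left hdist hδ
  have hinner : -⟪p, x - x₀⟫_ℝ ≤ δ / 3 * (2 / 3) :=
    ((neg_le_abs _).trans (abs_real_inner_le_norm _ _)).trans (by gcongr)
  have hx₀ := hx x₀
  rw [perturb_self, perturb] at hx₀
  have : 0 ≤ δ / 2 * ‖x - x₀‖ ^ 2 := by positivity
  linarith

theorem isProxSubgrad_supConv_add_supConv_neg (hK : IsCompact K) (hU : ContinuousOn U K)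
    (hV : ContinuousOn V K) (hz : z ∈ K) (hxz : supConv K U k x = U z - k * ‖x - z‖ ^ 2)
    (hw : w ∈ K) (hxw : supConv K (-V) k x = (-V) w - k * ‖x - w‖ ^ 2) :
    IsProxSubgrad (k + k) (fun x => supConv K U k x + supConv K (-V) k x) x
      ((2 * k) • (z - x) + (2 * k) • (w - x)) :=
  (isProxSubgrad_supConv hK hU hz hxz).add (isProxSubgrad_supConv hK hV.neg hw hxw)

theorem jets_of_isMax_perturb_supConv (hK : IsCompact K) (hU : ContinuousOn U K)
    (hV : ContinuousOn V K) (hk : 0 < k) (hδ : 0 < δ)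
    (hA : IsParaboloidEnvelope C (k + δ / 2) (supConv K U k) A G) (hX : HasFDerivAt G X x)
    (hx : ∀ y, perturb (fun x => supConv K U k x + supConv K (-V) k x) x₀ δ p y ≤
      perturb (fun x => supConv K U k x + supConv K (-V) k x) x₀ δ p x)
    (hz : z ∈ K) (hxz : supConv K U k x = U z - k * ‖x - z‖ ^ 2)
    (hw : w ∈ K) (hxw : supConv K (-V) k x = (-V) w - k * ‖x - w‖ ^ 2) :
    G x = (2 * k) • (z - x) ∧ G x = (2 * k) • (x - w) + (δ • (x - x₀) + p) ∧
      HasSuperjetWithin K U z (innerSL ℝ (G x)) (shiftedHessForm X δ) ∧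
      ∀ L : E →L[ℝ] E, HasSubjetWithin K V w (innerSL ℝ ((2 * k) • (x - w)))
        (pulledBackHessForm X δ k L) := by
  have hstat :=
    (isProxSubgrad_supConv_add_supConv_neg hK hU hV hz hxz hw hxw).eq_of_isMax_perturb hx
  have hcontact := fun y w' (hw' : w' ∈ K) =>
    hA.le_of_perturb_le (w := w') hk hδ (fun y => le_supConv hK hV.neg k y hw') hx y
  rw [Pi.neg_apply] at hxw
  have hAx : supConv K U k x = A x := by
    refine (hA.le x).antisymm ((hcontact x w hw).trans_eq ?_)
    rw [perturb, hxw]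
    ring
  have hGx : G x = (2 * k) • (z - x) :=
    (isProxSubgrad_supConv hK hU hz hxz).eq_of_le_of_eq hA.isC11With hA.le hAx
  have hGx' : G x = (2 * k) • (x - w) + (δ • (x - x₀) + p) := by
    rw [← hstat, hGx]
    module
  refine ⟨hGx, hGx', hasSuperjetWithin_of_le (k := k) hA.isC11With hX
    (fun y z' hz' => by linarith [hA.le y, le_supConv hK hU k y hz']) (by linarith) hδ,
    hasSubjetWithin_of_le hA.isC11With hX hcontact ?_ hGx' hδ⟩
  rw [← hAx, perturb, hxw]
  ring

theorem exists_jets_of_doubling [FiniteDimensional ℝ E] (hK : IsCompact K) (hne : K.Nonempty)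
    (hU : ContinuousOn U K) (hV : ContinuousOn V K) {τ : ℝ} (hτ : 0 < τ) (hδ : 0 < δ) :
    ∃ z ∈ K, ∃ w ∈ K, ∃ (q q' : E) (B : E →L[ℝ] E →L[ℝ] ℝ),
      (∀ z' ∈ K, ∀ w' ∈ K, U z' - V w' - ‖z' - w'‖ ^ 2 / (2 * τ) ≤
        U z - V w - ‖z - w‖ ^ 2 / (2 * τ) + δ) ∧
      ‖q - q'‖ ≤ δ ∧ ‖q - (1 / τ) • (z - w)‖ ≤ δ ∧
      HasSuperjetWithin K U z (innerSL ℝ q) B ∧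
      ∀ L : E →L[ℝ] E, ∃ B' : E →L[ℝ] E →L[ℝ] ℝ, HasSubjetWithin K V w (innerSL ℝ q') B' ∧
        ∀ η, B (L η) (L η) - B' η η = ‖L η - η‖ ^ 2 / τ + 2 * δ * ‖L η‖ ^ 2 := by
  obtain ⟨k, hk⟩ : ∃ k, k = 1 / τ := ⟨_, rfl⟩
  have hk0 : 0 < k := by rw [hk]; positivity
  have hdiv : ∀ s : ℝ, s / (2 * τ) = k / 2 * s := fun s => by rw [hk]; field_simp
  obtain ⟨A, G, hA⟩ := exists_isParaboloidEnvelope_supConv hK hne hU hk0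
    (show 0 < k + δ / 2 by positivity)
  obtain ⟨x₀, hmax, hpair⟩ := exists_isMax_supConv_add hK hne hU hV hk0
  choose z hz hxz using exists_supConv_eq hK hne hU k
  choose w hw hxw using exists_supConv_eq hK hne hV.neg k
  obtain ⟨x, p, hp, hx, X, hX⟩ := exists_isMax_perturb_differentiableAt
    (F := fun x => supConv K U k x + supConv K (-V) k x)
    ((continuous_supConv hK hU k).add (continuous_supConv hK hV.neg k)) hmax
    (add_nonneg hk0.le hk0.le) (fun x => ⟨_, isProxSubgrad_supConv_add_supConv_neg hK hU hV
      (hz x) (hxz x) (hw x) (hxw x)⟩)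
    (hA.isC11With.lipschitzWith (by positivity)) hδ (r := δ / 3) (by positivity)
  obtain ⟨hGx, hGx', hsuper, hsub⟩ := jets_of_isMax_perturb_supConv hK hU hV hk0 hδ hA hX hx
    (hz x) (hxz x) (hw x) (hxw x)
  have hdiff : ‖G x - (2 * k) • (x - w x)‖ ≤ δ := by
    rw [hGx', add_sub_cancel_left]
    refine (norm_add_le _ _).trans ?_
    rw [norm_smul, Real.norm_of_nonneg hδ.le]
    linarith [mul_norm_sub_le_of_isMax_perturb hmax hx]
  refine ⟨z x, hz x, w x, hw x, G x, (2 * k) • (x - w x), shiftedHessForm X δ,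
    fun z' hz' w' hw' => ?_, hdiff, ?_, hsuper,
    fun L => ⟨pulledBackHessForm X δ k L, hsub L, fun η => ?_⟩⟩
  · have hFx := le_add_of_isMax_perturb hδ hmax hp hx
    simp only [hxz x, hxw x, Pi.neg_apply] at hFx
    linarith [hpair z' hz' w' hw', half_mul_norm_sub_sq_le hk0 x (z x) (w x), hdiv (‖z' - w'‖ ^ 2),
      hdiv (‖z x - w x‖ ^ 2)]
  · rw [← hk, show G x - k • (z x - w x) = (1 / 2 : ℝ) • (G x - (2 * k) • (x - w x)) by
      rw [hGx]; module, norm_smul, Real.norm_of_nonneg (by norm_num)]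
    linarith
  · rw [shiftedHessForm_self, pulledBackHessForm_self, hk]
    ring

end TheoremOnSums

section SpaceTime

variable {X : Type*} [NormedAddCommGroup X]

/-- The squared norm on space-time in which time is measured in units of `θ`. -/
def scaledNormSq (θ : ℝ) (z : ℝ × X) : ℝ :=
  (z.1 / θ) ^ 2 + ‖z.2‖ ^ 2

theorem norm_sq_toLp_div (z : ℝ × X) (θ : ℝ) :
    ‖(WithLp.toLp 2 (z.1 / θ, z.2) : WithLp 2 (ℝ × X))‖ ^ 2 = scaledNormSq θ z := by
  rw [WithLp.prod_norm_sq_eq_of_L2, Real.norm_eq_abs, sq_abs]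
  rfl

variable [InnerProductSpace ℝ X]

/-- The outcome of doubling the variables in `U - V` over the compact set `K` with the penalty
`scaledNormSq θ (z - w) / (2 * τ)`: a pair `z, w` maximising up to `δ`, with a superjet of `U` at
`z` and subjets of `V` at `w` whose first order parts almost cancel. The comparison of second order
parts tests the two jets along different spatial vectors, related by an arbitrary linear map. -/
structure IsDoublingContact (K : Set (ℝ × X)) (U V : ℝ × X → ℝ) (τ θ δ : ℝ) (z w : ℝ × X)
    (ℓ ℓ' : ℝ × X →L[ℝ] ℝ) (B : ℝ × X →L[ℝ] ℝ × X →L[ℝ] ℝ) : Prop where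
  left_mem : z ∈ K
  right_mem : w ∈ K
  le_add : ∀ z' ∈ K, ∀ w' ∈ K, U z' - V w' - scaledNormSq θ (z' - w') / (2 * τ) ≤
    U z - V w - scaledNormSq θ (z - w) / (2 * τ) + δ
  time_sub_le : |ℓ (1, 0) - ℓ' (1, 0)| ≤ δ / θ
  space_sub_le : ∀ v, |ℓ (0, v) - ℓ' (0, v)| ≤ δ * ‖v‖
  space_le : ∀ v, |ℓ (0, v)| ≤ (‖z.2 - w.2‖ / τ + δ) * ‖v‖
  superjet : HasSuperjetWithin K U z ℓ B
  exists_subjet : ∀ M : X →L[ℝ] X, ∃ B', HasSubjetWithin K V w ℓ' B' ∧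
    ∀ v, B (0, M v) (0, M v) - B' (0, v) (0, v) = ‖M v - v‖ ^ 2 / τ + 2 * δ * ‖M v‖ ^ 2

theorem exists_timeScaling (X : Type*) [NormedAddCommGroup X] [InnerProductSpace ℝ X] {θ : ℝ}
    (hθ : 0 < θ) :
    ∃ e : (ℝ × X) ≃L[ℝ] WithLp 2 (ℝ × X), ∀ z, e z = WithLp.toLp 2 (z.1 / θ, z.2) :=
  ⟨((ContinuousLinearEquiv.smulLeft (Units.mk0 θ⁻¹ (inv_ne_zero hθ.ne'))).prodCongr
      (ContinuousLinearEquiv.refl ℝ X)).trans (WithLp.prodContinuousLinearEquiv 2 ℝ ℝ X).symm,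
    fun z => by simp [Units.smul_def, div_eq_inv_mul]⟩

theorem abs_inner_le_of_norm_sub_smul_le {q u : X} {c δ : ℝ} (hc : 0 ≤ c)
    (h : ‖q - c • u‖ ≤ δ) (v : X) : |⟪q, v⟫_ℝ| ≤ δ * ‖v‖ + c * |⟪u, v⟫_ℝ| := by
  have hsplit : ⟪q, v⟫_ℝ = ⟪q - c • u, v⟫_ℝ + c * ⟪u, v⟫_ℝ := by
    rw [inner_sub_left, real_inner_smul_left, sub_add_cancel]
  rw [hsplit, ← abs_of_nonneg hc, ← abs_mul, abs_of_nonneg hc]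
  exact (abs_add_le _ _).trans
    (add_le_add_left ((abs_real_inner_le_norm _ _).trans (by gcongr)) _)

theorem exists_isDoublingContact [FiniteDimensional ℝ X] {K : Set (ℝ × X)} {U V : ℝ × X → ℝ}
    (hK : IsCompact K) (hne : K.Nonempty) (hU : ContinuousOn U K) (hV : ContinuousOn V K)
    {τ θ δ : ℝ} (hτ : 0 < τ) (hθ : 0 < θ) (hδ : 0 < δ) :
    ∃ z w ℓ ℓ' B, IsDoublingContact K U V τ θ δ z w ℓ ℓ' B := by
  obtain ⟨e, he⟩ := exists_timeScaling X hθ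
  have hsymm : ∀ {W : ℝ × X → ℝ}, ContinuousOn W K → ContinuousOn (W ∘ e.symm) (e '' K) :=
    fun hW => hW.comp e.symm.continuous.continuousOn fun _ hz => by
      obtain ⟨z, hz, rfl⟩ := hz
      rwa [e.symm_apply_apply]
  obtain ⟨_, ⟨z, hz, rfl⟩, _, ⟨w, hw, rfl⟩, q, q', B, hmax, hqq', hq, hsuper, hsub⟩ :=
    exists_jets_of_doubling (hK.image e.continuous) (hne.image e) (hsymm hU) (hsymm hV) hτ hδ
  have hnorm : ∀ z, ‖e z‖ ^ 2 = scaledNormSq θ z := fun z => by rw [he, norm_sq_toLp_div]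
  have hspace : ∀ v : X, ‖e (0, v)‖ = ‖v‖ := fun v =>
    (sq_eq_sq₀ (norm_nonneg _) (norm_nonneg _)).mp (by simp [hnorm, scaledNormSq])
  have htime : ‖e (1, 0)‖ = 1 / θ :=
    (sq_eq_sq₀ (norm_nonneg _) (by positivity)).mp (by simp [hnorm, scaledNormSq])
  have hsub_le : ∀ ζ, |⟪q, e ζ⟫_ℝ - ⟪q', e ζ⟫_ℝ| ≤ δ * ‖e ζ‖ := fun ζ => by
    rw [← inner_sub_left]
    exact (abs_real_inner_le_norm _ _).trans (by gcongr)
  refine ⟨z, w, (innerSL ℝ q).comp (e : ℝ × X →L[ℝ] WithLp 2 (ℝ × X)),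
    (innerSL ℝ q').comp (e : ℝ × X →L[ℝ] WithLp 2 (ℝ × X)),
    B.bilinearComp (e : ℝ × X →L[ℝ] WithLp 2 (ℝ × X)) (e : ℝ × X →L[ℝ] WithLp 2 (ℝ × X)),
    hz, hw, fun z' hz' w' hw' => ?_, (hsub_le (1, 0)).trans_eq ?_,
    fun v => (hsub_le (0, v)).trans_eq ?_, fun v => ?_,
    by simpa using hsuper.of_symm e, fun M => ?_⟩
  · simpa [← map_sub, hnorm] using hmax _ (mem_image_of_mem e hz') _ (mem_image_of_mem e hw')
  · rw [htime, mul_one_div]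
  · rw [hspace]
  · have hinner : ⟪e z - e w, e (0, v)⟫_ℝ = ⟪z.2 - w.2, v⟫_ℝ := by
      simp [he, WithLp.prod_inner_apply]
    calc |⟪q, e (0, v)⟫_ℝ| ≤ δ * ‖v‖ + 1 / τ * |⟪z.2 - w.2, v⟫_ℝ| := by
          simpa only [hspace, hinner] using
            abs_inner_le_of_norm_sub_smul_le (by positivity) hq (e (0, v))
      _ ≤ δ * ‖v‖ + 1 / τ * (‖z.2 - w.2‖ * ‖v‖) := by
          gcongr
          exact abs_real_inner_le_norm _ _
      _ = (‖z.2 - w.2‖ / τ + δ) * ‖v‖ := by ring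
  · obtain ⟨B', hB', hBB'⟩ := hsub ((e : ℝ × X →L[ℝ] WithLp 2 (ℝ × X)).comp
      (((ContinuousLinearMap.id ℝ ℝ).prodMap M).comp (e.symm : WithLp 2 (ℝ × X) →L[ℝ] ℝ × X)))
    refine ⟨_, by simpa using hB'.of_symm e, fun v => ?_⟩
    simpa [← map_sub, hspace] using hBB' (e (0, v))

end SpaceTime

section Calculus

variable {E : Type*} [NormedAddCommGroup E] [NormedSpace ℝ E] {F : E → ℝ}

theorem hasDerivAt_add_smul (x v : E) (r : ℝ) : HasDerivAt (fun r : ℝ => x + r • v) v r := by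
  simpa using ((hasDerivAt_id r).smul_const v).const_add x

theorem hasFDerivAt_fderiv_of_contDiff (hF : ContDiff ℝ 2 F) (x : E) :
    HasFDerivAt (fderiv ℝ F) (fderiv ℝ (fderiv ℝ F) x) x :=
  ((hF.fderiv_right (m := 1) le_rfl).differentiable one_ne_zero x).hasFDerivAt

theorem hasDerivAt_line_of_contDiff (hF : ContDiff ℝ 2 F) (x v : E) (r : ℝ) :
    HasDerivAt (fun r : ℝ => F (x + r • v)) (fderiv ℝ F (x + r • v) v) r :=
  (hF.differentiable two_ne_zero _).hasFDerivAt.comp_hasDerivAt r (hasDerivAt_add_smul x v r)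

theorem hasDerivAt_fderiv_line_of_contDiff (hF : ContDiff ℝ 2 F) (x v : E) :
    HasDerivAt (fun r : ℝ => fderiv ℝ F (x + r • v) v) (fderiv ℝ (fderiv ℝ F) x v v) 0 := by
  have h := (hasFDerivAt_fderiv_of_contDiff hF (x + (0 : ℝ) • v)).comp_hasDerivAt 0
    (hasDerivAt_add_smul x v 0)
  simpa using h.clm_apply (hasDerivAt_const (0 : ℝ) v)

theorem fderiv_apply_eq_of_hasDerivAt_line (hF : ContDiff ℝ 2 F) {x v : E} {a : ℝ}
    (h : HasDerivAt (fun r : ℝ => F (x + r • v)) a 0) : fderiv ℝ F x v = a := by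
  simpa using (hasDerivAt_line_of_contDiff hF x v 0).unique h

theorem fderiv_fderiv_apply_eq_of_hasDerivAt_line (hF : ContDiff ℝ 2 F) {x v : E} {g : ℝ → ℝ}
    {a : ℝ} (hg : ∀ r, HasDerivAt (fun r : ℝ => F (x + r • v)) (g r) r) (ha : HasDerivAt g a 0) :
    fderiv ℝ (fderiv ℝ F) x v v = a := by
  have hfderiv : (fun r : ℝ => fderiv ℝ F (x + r • v) v) = g :=
    funext fun r => (hasDerivAt_line_of_contDiff hF x v r).unique (hg r)
  have h := hasDerivAt_fderiv_line_of_contDiff hF x v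
  rw [hfderiv] at h
  exact h.unique ha

/-- The quadratic polynomial centred at `z` with jet `(ℓ, B)`, in the convention of
`HasSuperjetWithin`. -/
def jetPoly (z : E) (ℓ : E →L[ℝ] ℝ) (B : E →L[ℝ] E →L[ℝ] ℝ) (z' : E) : ℝ :=
  ℓ (z' - z) + B (z' - z) (z' - z)

theorem contDiff_jetPoly (z : E) (ℓ : E →L[ℝ] ℝ) (B : E →L[ℝ] E →L[ℝ] ℝ) :
    ContDiff ℝ 2 (jetPoly z ℓ B) := by
  unfold jetPoly
  fun_prop

theorem hasDerivAt_jetPoly_line (z : E) (ℓ : E →L[ℝ] ℝ) (B : E →L[ℝ] E →L[ℝ] ℝ) (v : E) (r : ℝ) :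
    HasDerivAt (fun r : ℝ => jetPoly z ℓ B (z + r • v)) (ℓ v + 2 * r * B v v) r := by
  have hline : (fun r : ℝ => jetPoly z ℓ B (z + r • v)) = fun r => r * ℓ v + r ^ 2 * B v v := by
    funext r
    simp only [jetPoly, add_sub_cancel_left, map_smul, _root_.smul_apply, smul_eq_mul]
    ring
  rw [hline]
  simpa using ((hasDerivAt_id r).mul_const (ℓ v)).fun_add
    (((hasDerivAt_id r).pow 2).mul_const (B v v))

theorem fderiv_jetPoly_apply (z : E) (ℓ : E →L[ℝ] ℝ) (B : E →L[ℝ] E →L[ℝ] ℝ) (v : E) :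
    fderiv ℝ (jetPoly z ℓ B) z v = ℓ v :=
  fderiv_apply_eq_of_hasDerivAt_line (contDiff_jetPoly z ℓ B) <| by
    simpa using hasDerivAt_jetPoly_line z ℓ B v 0

theorem fderiv_fderiv_jetPoly_apply (z : E) (ℓ : E →L[ℝ] ℝ) (B : E →L[ℝ] E →L[ℝ] ℝ) (v : E) :
    fderiv ℝ (fderiv ℝ (jetPoly z ℓ B)) z v v = 2 * B v v :=
  fderiv_fderiv_apply_eq_of_hasDerivAt_line (contDiff_jetPoly z ℓ B)
    (hasDerivAt_jetPoly_line z ℓ B v) <| by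
      simpa using (((hasDerivAt_id (0 : ℝ)).const_mul 2).mul_const (B v v)).const_add (ℓ v)

end Calculus

section DifferentialOperators

variable {d : ℕ} {φ : ℝ × EuclideanSpace ℝ (Fin d) → ℝ}

theorem timeDeriv_eq_fderiv (hφ : ContDiff ℝ 2 φ) (t : ℝ) (x : EuclideanSpace ℝ (Fin d)) :
    timeDeriv φ t x = fderiv ℝ φ (t, x) (1, 0) :=
  ((hφ.differentiable two_ne_zero (t, x)).hasFDerivAt.comp_hasDerivAt t
    ((hasDerivAt_id t).prodMk (hasDerivAt_const t x))).deriv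

theorem fderiv_slice (hφ : ContDiff ℝ 2 φ) (t : ℝ) (x : EuclideanSpace ℝ (Fin d)) :
    fderiv ℝ (fun y => φ (t, y)) x = (fderiv ℝ φ (t, x)).comp (ContinuousLinearMap.inr ℝ _ _) :=
  ((hφ.differentiable two_ne_zero (t, x)).hasFDerivAt.comp x (hasFDerivAt_prodMk_right t x)).fderiv

theorem inner_spaceGrad (hφ : ContDiff ℝ 2 φ) (t : ℝ) (x v : EuclideanSpace ℝ (Fin d)) :
    ⟪spaceGrad φ t x, v⟫_ℝ = fderiv ℝ φ (t, x) (0, v) := by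
  rw [spaceGrad, gradient, InnerProductSpace.toDual_symm_apply, fderiv_slice hφ]
  rfl

theorem spaceHess_apply (hφ : ContDiff ℝ 2 φ) (t : ℝ) (x : EuclideanSpace ℝ (Fin d))
    (i j : Fin d) : spaceHess φ t x i j = fderiv ℝ (fderiv ℝ φ) (t, x)
      (0, EuclideanSpace.single i 1) (0, EuclideanSpace.single j 1) := by
  have hslice := (hasFDerivAt_fderiv_of_contDiff hφ (t, x)).comp x (hasFDerivAt_prodMk_right t x)
  have h := (hslice.clm_apply
    (hasFDerivAt_const ((0 : ℝ), EuclideanSpace.single j (1 : ℝ)) x)).fderiv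
  simp only [spaceHess, fderiv_slice hφ]
  simpa using congrArg (fun D => D (EuclideanSpace.single i 1)) h

/-- The `k`-th column of a matrix as a Euclidean vector. -/
def colVec (M : Matrix (Fin d) (Fin d) ℝ) (k : Fin d) : EuclideanSpace ℝ (Fin d) :=
  WithLp.toLp 2 (M.col k)

theorem colVec_eq_sum (M : Matrix (Fin d) (Fin d) ℝ) (k : Fin d) :
    colVec M k = ∑ i, M i k • EuclideanSpace.single i (1 : ℝ) := by
  ext j
  simp [colVec, Pi.single_apply]

theorem trace_mul_transpose_mul (M N : Matrix (Fin d) (Fin d) ℝ)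
    (B : EuclideanSpace ℝ (Fin d) →L[ℝ] EuclideanSpace ℝ (Fin d) →L[ℝ] ℝ)
    (hN : ∀ i j, N i j = B (EuclideanSpace.single i 1) (EuclideanSpace.single j 1)) :
    (M * Mᵀ * N).trace = ∑ k, B (colVec M k) (colVec M k) := by
  rw [Matrix.mul_assoc, Matrix.trace_mul_comm, Matrix.trace]
  refine Finset.sum_congr rfl fun k _ => ?_
  simp only [Matrix.diag, Matrix.mul_apply, Matrix.transpose_apply, hN, colVec_eq_sum, map_sum,
    map_smul, _root_.sum_apply, _root_.smul_apply, smul_eq_mul, Finset.sum_mul, Finset.mul_sum]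
  refine Finset.sum_congr rfl fun i _ => Finset.sum_congr rfl fun j _ => ?_
  ring

theorem genL_eq_sum (σm : ℝ → EuclideanSpace ℝ (Fin d) → Matrix (Fin d) (Fin d) ℝ)
    (hφ : ContDiff ℝ 2 φ) (t : ℝ) (x : EuclideanSpace ℝ (Fin d)) :
    genL σm φ t x = ∑ k, 1 / 2 * fderiv ℝ (fderiv ℝ φ) (t, x) (0, colVec (σm t x) k)
      (0, colVec (σm t x) k) := by
  rw [genL, trace_mul_transpose_mul (σm t x) _ ((fderiv ℝ (fderiv ℝ φ) (t, x)).bilinearComp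
    (ContinuousLinearMap.inr ℝ _ _) (ContinuousLinearMap.inr ℝ _ _)) (spaceHess_apply hφ t x),
    Finset.mul_sum]
  rfl

theorem inner_mvec_transpose_mvec_inv {M : Matrix (Fin d) (Fin d) ℝ} (hM : IsUnit M)
    (p v : EuclideanSpace ℝ (Fin d)) : ⟪mvec Mᵀ p, mvec M⁻¹ v⟫_ℝ = ⟪p, v⟫_ℝ := by
  have hdet : IsUnit M.det := (Matrix.isUnit_iff_isUnit_det _).mp hM
  rw [mvec, mvec, ← Matrix.conjTranspose_eq_transpose_of_trivial,
    Matrix.toEuclideanLin_conjTranspose_eq_adjoint, LinearMap.adjoint_inner_left]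
  simp only [Matrix.toLpLin_apply, Matrix.mulVec_mulVec, Matrix.mul_nonsing_inv _ hdet,
    Matrix.one_mulVec]

theorem exp_mul_Hstar {A B : Type*}
    (σm : ℝ → EuclideanSpace ℝ (Fin d) → Matrix (Fin d) (Fin d) ℝ)
    (f : ℝ → EuclideanSpace ℝ (Fin d) → A → B → EuclideanSpace ℝ (Fin d))
    (Γ : ℝ → EuclideanSpace ℝ (Fin d) → A → B → ℝ)
    {t : ℝ} {x : EuclideanSpace ℝ (Fin d)} (hσ : IsUnit (σm t x)) (p : EuclideanSpace ℝ (Fin d)) :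
    Real.exp t * Hstar σm f Γ t x (Real.exp (-t) • mvec (σm t x)ᵀ p) =
      ⨅ u : A, ⨆ v : B, (⟪p, f t x u v⟫_ℝ + Real.exp t * Γ t x u v) := by
  simp only [Hstar, Real.mul_iInf_of_nonneg (Real.exp_pos t).le,
    Real.mul_iSup_of_nonneg (Real.exp_pos t).le, Hfun, real_inner_smul_left,
    inner_mvec_transpose_mvec_inv hσ, mul_add, ← mul_assoc, ← Real.exp_add, add_neg_cancel,
    Real.exp_zero, one_mul]

end DifferentialOperators

section JetOperator

variable {X : Type*} [NormedAddCommGroup X] [NormedSpace ℝ X] {ι : Type*} [Fintype ι]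
variable {A B : Type*}

/-- The nonlinear parabolic operator of the equation, evaluated at a jet `(ℓ, Q)` in the convention
of `HasSuperjetWithin`, with diffusion vectors `c`, controlled drift `F` and running payoff `G`. -/
def jetOp (c : ι → X) (F : A → B → X) (G : A → B → ℝ) (ℓ : ℝ × X →L[ℝ] ℝ)
    (Q : ℝ × X →L[ℝ] ℝ × X →L[ℝ] ℝ) : ℝ :=
  ℓ (1, 0) + ∑ k, Q (0, c k) (0, c k) + ⨅ a, ⨆ b, (ℓ (0, F a b) + G a b)

/-- The linear parabolic operator `∂_t + (1 / 2) ∑ k, ∂²_{c k} + ∂_v`. -/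
def linOp (c : ι → X) (v : X) (ψ : ℝ × X → ℝ) (z : ℝ × X) : ℝ :=
  fderiv ℝ ψ z (1, 0) + ∑ k, 1 / 2 * fderiv ℝ (fderiv ℝ ψ) z (0, c k) (0, c k) +
    fderiv ℝ ψ z (0, v)

theorem ciInf_ciSup_le_add [Nonempty A] [Nonempty B] {F G : A → B → ℝ} {c : ℝ}
    (hF : ∃ C, ∀ a b, |F a b| ≤ C) (hG : ∃ C, ∀ a b, |G a b| ≤ C)
    (h : ∀ a b, F a b ≤ G a b + c) : ⨅ a, ⨆ b, F a b ≤ (⨅ a, ⨆ b, G a b) + c := by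
  obtain ⟨C, hC⟩ := hF
  obtain ⟨C', hC'⟩ := hG
  have hbelow : BddBelow (range fun a => ⨆ b, F a b) := ⟨-C, by
    rintro _ ⟨a, rfl⟩
    obtain ⟨b⟩ := ‹Nonempty B›
    exact (abs_le.mp (hC a b)).1.trans
      (le_ciSup ⟨C, forall_mem_range.mpr fun b => (abs_le.mp (hC a b)).2⟩ b)⟩
  refine sub_le_iff_le_add.mp (le_ciInf fun a => sub_le_iff_le_add.mpr ?_)
  have habove : BddAbove (range (G a)) :=
    ⟨C', forall_mem_range.mpr fun b => (abs_le.mp (hC' a b)).2⟩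
  exact (ciInf_le hbelow a).trans (ciSup_le fun b =>
    (h a b).trans (add_le_add_left (le_ciSup habove b) c))

theorem exists_abs_clm_add_le {F : A → B → X} {G : A → B → ℝ} (hF : ∃ C, ∀ a b, ‖F a b‖ ≤ C)
    (hG : ∃ C, ∀ a b, |G a b| ≤ C) (ℓ : ℝ × X →L[ℝ] ℝ) :
    ∃ C, ∀ a b, |ℓ (0, F a b) + G a b| ≤ C := by
  obtain ⟨C, hC⟩ := hF
  obtain ⟨C', hC'⟩ := hG
  refine ⟨‖ℓ‖ * C + C', fun a b => (abs_add_le _ _).trans (add_le_add ?_ (hC' a b))⟩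
  refine (ℓ.le_opNorm _).trans ?_
  gcongr
  simpa using hC a b

theorem jetOp_le_add [Nonempty A] [Nonempty B] {c c' : ι → X} {F F' : A → B → X}
    {G G' : A → B → ℝ} {ℓ ℓ' : ℝ × X →L[ℝ] ℝ} {Q Q' : ℝ × X →L[ℝ] ℝ × X →L[ℝ] ℝ} {r s q : ℝ}
    (hF : ∃ C, ∀ a b, ‖F a b‖ ≤ C) (hG : ∃ C, ∀ a b, |G a b| ≤ C)
    (hF' : ∃ C, ∀ a b, ‖F' a b‖ ≤ C) (hG' : ∃ C, ∀ a b, |G' a b| ≤ C)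
    (htime : ℓ (1, 0) ≤ ℓ' (1, 0) + r)
    (hdiff : ∀ k, Q (0, c k) (0, c k) ≤ Q' (0, c' k) (0, c' k) + s)
    (hgame : ∀ a b, ℓ (0, F a b) + G a b ≤ ℓ' (0, F' a b) + G' a b + q) :
    jetOp c F G ℓ Q ≤ jetOp c' F' G' ℓ' Q' + (r + Fintype.card ι * s + q) := by
  have hvalue := ciInf_ciSup_le_add (exists_abs_clm_add_le hF hG ℓ)
    (exists_abs_clm_add_le hF' hG' ℓ') hgame
  have hsum : ∑ k, Q (0, c k) (0, c k) ≤ ∑ k, Q' (0, c' k) (0, c' k) + Fintype.card ι * s := by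
    simpa [Finset.sum_add_distrib] using Finset.sum_le_sum fun k (_ : k ∈ Finset.univ) => hdiff k
  unfold jetOp
  linarith

theorem jetOp_add_fderiv_le [Nonempty A] [Nonempty B] {c : ι → X} {F : A → B → X} {G : A → B → ℝ}
    (hF : ∃ C, ∀ a b, ‖F a b‖ ≤ C) (hG : ∃ C, ∀ a b, |G a b| ≤ C) {ψ : ℝ × X → ℝ} {z : ℝ × X}
    (hψ : ∀ a b, linOp c (F a b) ψ z ≤ 0) (ℓ : ℝ × X →L[ℝ] ℝ)
    (Q : ℝ × X →L[ℝ] ℝ × X →L[ℝ] ℝ) :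
    jetOp c F G (ℓ + fderiv ℝ ψ z) (Q + (1 / 2 : ℝ) • fderiv ℝ (fderiv ℝ ψ) z) ≤
      jetOp c F G ℓ Q := by
  have hvalue := ciInf_ciSup_le_add
    (c := -(fderiv ℝ ψ z (1, 0) + ∑ k, 1 / 2 * fderiv ℝ (fderiv ℝ ψ) z (0, c k) (0, c k)))
    (exists_abs_clm_add_le hF hG (ℓ + fderiv ℝ ψ z)) (exists_abs_clm_add_le hF hG ℓ) fun a b => by
      have hab := hψ a b
      rw [linOp] at hab
      rw [_root_.add_apply]
      linarith
  simp only [jetOp, _root_.add_apply, _root_.smul_apply, smul_eq_mul,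
    Finset.sum_add_distrib] at hvalue ⊢
  linarith

end JetOperator

section GrowthPenalty

variable {X : Type*} [NormedAddCommGroup X] {β lam T : ℝ} {m : ℕ}

/-- A penalty growing like `‖x‖ ^ (2 * m + 4)`, with weight `β`. The exponential decay in time makes
it a supersolution of linear parabolic equations when `lam` is large. -/
def growthPenalty (β lam T : ℝ) (m : ℕ) (z : ℝ × X) : ℝ :=
  β * Real.exp (lam * (T - z.1)) * (1 + ‖z.2‖ ^ 2) ^ (m + 2)

theorem growthPenalty_nonneg (hβ : 0 ≤ β) (z : ℝ × X) : 0 ≤ growthPenalty β lam T m z := by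
  unfold growthPenalty
  positivity

theorem mul_pow_le_growthPenalty (hβ : 0 ≤ β) (hlam : 0 ≤ lam) {z : ℝ × X} (hz : z.1 ≤ T) :
    β * (1 + ‖z.2‖ ^ 2) ^ (m + 2) ≤ growthPenalty β lam T m z := by
  have hexp : 1 ≤ Real.exp (lam * (T - z.1)) :=
    Real.one_le_exp (mul_nonneg hlam (sub_nonneg.mpr hz))
  unfold growthPenalty
  gcongr
  exact le_mul_of_one_le_right hβ hexp

theorem exists_mul_pow_le_growthPenalty (hβ : 0 < β) (hlam : 0 ≤ lam) (N : ℝ) (m : ℕ) :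
    ∃ R : ℝ, ∀ z : ℝ × X, z.1 ≤ T → R ≤ ‖z.2‖ →
      N * (1 + ‖z.2‖ ^ 2) ^ m ≤ growthPenalty β lam T m z := by
  refine ⟨N / β, fun z hzT hzR => le_trans ?_ (mul_pow_le_growthPenalty hβ.le hlam hzT)⟩
  have hnorm : ‖z.2‖ ≤ (1 + ‖z.2‖ ^ 2) ^ 2 := by
    nlinarith [sq_nonneg (‖z.2‖ - 1), sq_nonneg (‖z.2‖ ^ 2)]
  calc N * (1 + ‖z.2‖ ^ 2) ^ m ≤ β * (1 + ‖z.2‖ ^ 2) ^ 2 * (1 + ‖z.2‖ ^ 2) ^ m := by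
        gcongr
        exact (div_le_iff₀' hβ).mp (hzR.trans hnorm)
    _ = β * (1 + ‖z.2‖ ^ 2) ^ (m + 2) := by ring

variable [InnerProductSpace ℝ X] {ι : Type*} [Fintype ι] {C t : ℝ} {x v : X}

theorem contDiff_growthPenalty (β lam T : ℝ) (m : ℕ) :
    ContDiff ℝ 2 (growthPenalty (X := X) β lam T m) :=
  (contDiff_const.mul (contDiff_const.mul (contDiff_const.sub contDiff_fst)).exp).mul
    ((contDiff_const.add (contDiff_snd.norm_sq ℝ)).pow _)

theorem fderiv_growthPenalty_time :
    fderiv ℝ (growthPenalty β lam T m) (t, x) (1, 0) = -lam * growthPenalty β lam T m (t, x) := by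
  refine fderiv_apply_eq_of_hasDerivAt_line (contDiff_growthPenalty β lam T m) ?_
  have hline : (fun r : ℝ => growthPenalty β lam T m ((t, x) + r • ((1 : ℝ), (0 : X)))) =
      fun r => β * Real.exp (lam * (T - (t + r))) * (1 + ‖x‖ ^ 2) ^ (m + 2) := by
    funext r
    simp [growthPenalty]
  rw [hline]
  refine ((((((hasDerivAt_id (0 : ℝ)).const_add t).const_sub T).const_mul lam).exp.const_mul
    β).mul_const ((1 + ‖x‖ ^ 2) ^ (m + 2))).congr_deriv ?_
  simp only [growthPenalty, id, add_zero]
  ring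

theorem hasDerivAt_one_add_norm_sq_line (x v : X) (r : ℝ) :
    HasDerivAt (fun r : ℝ => 1 + ‖x + r • v‖ ^ 2) (2 * ⟪x + r • v, v⟫_ℝ) r :=
  (hasDerivAt_add_smul x v r).norm_sq.const_add 1

theorem hasDerivAt_growthPenalty_line (β lam T : ℝ) (m : ℕ) (t : ℝ) (x v : X) (r : ℝ) :
    HasDerivAt (fun r : ℝ => growthPenalty β lam T m ((t, x) + r • ((0 : ℝ), v)))
      (β * Real.exp (lam * (T - t)) *
        ((m + 2) * (1 + ‖x + r • v‖ ^ 2) ^ (m + 1) * (2 * ⟪x + r • v, v⟫_ℝ))) r := by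
  simpa [growthPenalty] using ((hasDerivAt_one_add_norm_sq_line x v r).fun_pow (m + 2)).const_mul
    (β * Real.exp (lam * (T - t)))

theorem fderiv_growthPenalty_space :
    fderiv ℝ (growthPenalty β lam T m) (t, x) (0, v) =
      β * Real.exp (lam * (T - t)) * ((m + 2) * (1 + ‖x‖ ^ 2) ^ (m + 1) * (2 * ⟪x, v⟫_ℝ)) :=
  fderiv_apply_eq_of_hasDerivAt_line (contDiff_growthPenalty β lam T m) <| by
    simpa using hasDerivAt_growthPenalty_line β lam T m t x v 0

theorem fderiv_fderiv_growthPenalty_space :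
    fderiv ℝ (fderiv ℝ (growthPenalty β lam T m)) (t, x) (0, v) (0, v) =
      β * Real.exp (lam * (T - t)) * ((m + 2) * ((m + 1) * (1 + ‖x‖ ^ 2) ^ m * (2 * ⟪x, v⟫_ℝ) ^ 2 +
        (1 + ‖x‖ ^ 2) ^ (m + 1) * (2 * ‖v‖ ^ 2))) := by
  refine fderiv_fderiv_apply_eq_of_hasDerivAt_line (contDiff_growthPenalty β lam T m)
    (hasDerivAt_growthPenalty_line β lam T m t x v) ?_
  have hinner := ((hasDerivAt_add_smul x v 0).inner ℝ (hasDerivAt_const (0 : ℝ) v)).const_mul 2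
  have h := ((((hasDerivAt_one_add_norm_sq_line x v 0).fun_pow (m + 1)).const_mul
    ((m : ℝ) + 2)).mul hinner).const_mul (β * Real.exp (lam * (T - t)))
  refine h.congr_deriv ?_
  simp only [zero_smul, add_zero, inner_zero_right, zero_add, real_inner_self_eq_norm_sq,
    Nat.add_sub_cancel, Nat.cast_add, Nat.cast_one]
  ring

theorem fderiv_growthPenalty_space_le (hβ : 0 ≤ β) (hC : 0 ≤ C) (hv : ‖v‖ ≤ C * (1 + ‖x‖)) :
    fderiv ℝ (growthPenalty β lam T m) (t, x) (0, v) ≤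
      4 * (m + 2) * C * growthPenalty β lam T m (t, x) := by
  have hinner : 2 * ⟪x, v⟫_ℝ ≤ 4 * C * (1 + ‖x‖ ^ 2) :=
    calc 2 * ⟪x, v⟫_ℝ ≤ 2 * (‖x‖ * (C * (1 + ‖x‖))) := by
          gcongr
          exact (real_inner_le_norm x v).trans (by gcongr)
      _ ≤ 4 * C * (1 + ‖x‖ ^ 2) := by nlinarith [mul_nonneg hC (sq_nonneg (‖x‖ - 1))]
  rw [fderiv_growthPenalty_space, growthPenalty]
  calc _ ≤ β * Real.exp (lam * (T - t)) *
        ((m + 2) * (1 + ‖x‖ ^ 2) ^ (m + 1) * (4 * C * (1 + ‖x‖ ^ 2))) := by gcongr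
    _ = _ := by ring

theorem fderiv_fderiv_growthPenalty_space_le (hβ : 0 ≤ β) (hv : ‖v‖ ≤ C) :
    fderiv ℝ (fderiv ℝ (growthPenalty β lam T m)) (t, x) (0, v) (0, v) ≤
      (m + 2) * (4 * m + 6) * C ^ 2 * growthPenalty β lam T m (t, x) := by
  have hinner : (2 * ⟪x, v⟫_ℝ) ^ 2 ≤ 4 * C ^ 2 * (1 + ‖x‖ ^ 2) ^ 2 :=
    calc (2 * ⟪x, v⟫_ℝ) ^ 2 = 4 * |⟪x, v⟫_ℝ| ^ 2 := by rw [sq_abs]; ring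
      _ ≤ 4 * (‖x‖ * C) ^ 2 := by
          gcongr
          exact (abs_real_inner_le_norm x v).trans (by gcongr)
      _ ≤ 4 * C ^ 2 * (1 + ‖x‖ ^ 2) ^ 2 := by
          nlinarith [mul_nonneg (sq_nonneg C) (by positivity : 0 ≤ 1 + ‖x‖ ^ 2 + ‖x‖ ^ 4)]
  have hnorm : 2 * ‖v‖ ^ 2 ≤ 2 * C ^ 2 * (1 + ‖x‖ ^ 2) :=
    calc 2 * ‖v‖ ^ 2 ≤ 2 * C ^ 2 := by gcongr
      _ ≤ 2 * C ^ 2 * (1 + ‖x‖ ^ 2) :=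
          le_mul_of_one_le_right (by positivity) (le_add_of_nonneg_right (sq_nonneg _))
  rw [fderiv_fderiv_growthPenalty_space, growthPenalty]
  calc _ ≤ β * Real.exp (lam * (T - t)) * ((m + 2) * ((m + 1) * (1 + ‖x‖ ^ 2) ^ m *
        (4 * C ^ 2 * (1 + ‖x‖ ^ 2) ^ 2) +
          (1 + ‖x‖ ^ 2) ^ (m + 1) * (2 * C ^ 2 * (1 + ‖x‖ ^ 2)))) := by gcongr
    _ = _ := by ring

theorem linOp_growthPenalty_nonpos {c : ι → X} (hβ : 0 ≤ β) (hC : 0 ≤ C) (hc : ∀ k, ‖c k‖ ≤ C)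
    (hv : ‖v‖ ≤ C * (1 + ‖x‖))
    (hlam : Fintype.card ι * (1 / 2 * ((m + 2) * (4 * m + 6) * C ^ 2)) + 4 * (m + 2) * C ≤ lam) :
    linOp c v (growthPenalty β lam T m) (t, x) ≤ 0 := by
  have hsum := Finset.sum_le_card_nsmul Finset.univ (fun k => 1 / 2 *
      fderiv ℝ (fderiv ℝ (growthPenalty β lam T m)) (t, x) (0, c k) (0, c k))
    (1 / 2 * ((m + 2) * (4 * m + 6) * C ^ 2 * growthPenalty β lam T m (t, x)))
    (fun k _ => by gcongr; exact fderiv_fderiv_growthPenalty_space_le hβ (hc k))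
  rw [nsmul_eq_mul, Finset.card_univ] at hsum
  rw [linOp, fderiv_growthPenalty_time]
  have hdrift := fderiv_growthPenalty_space_le (lam := lam) (T := T) (m := m) (t := t) hβ hC hv
  linarith [mul_le_mul_of_nonneg_right hlam
    (growthPenalty_nonneg (lam := lam) (T := T) (m := m) hβ (t, x))]

end GrowthPenalty

section ObstacleProblem

/-- The data of a double-obstacle parabolic equation of Isaacs type on `ℝ × X`: diffusion vectors
(in the concrete equation, the columns of the volatility matrix), controlled drift, running payoff,
and lower and upper obstacles. -/
structure ObstacleProblem (X ι A B : Type*) where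
  diffusion : ℝ × X → ι → X
  drift : ℝ × X → A → B → X
  payoff : ℝ × X → A → B → ℝ
  lower : ℝ × X → ℝ
  upper : ℝ × X → ℝ

namespace ObstacleProblem

variable {X : Type*} [NormedAddCommGroup X] [NormedSpace ℝ X] {ι : Type*} [Fintype ι]
variable {A B : Type*}

/-- The differential operator of the equation at the jet `(ℓ, Q)` based at `z`. -/
def op (P : ObstacleProblem X ι A B) (z : ℝ × X) (ℓ : ℝ × X →L[ℝ] ℝ)
    (Q : ℝ × X →L[ℝ] ℝ × X →L[ℝ] ℝ) : ℝ :=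
  jetOp (P.diffusion z) (P.drift z) (P.payoff z) ℓ Q

/-- Viscosity subsolutions on `[0, T] × X`, tested only before the terminal time. -/
def IsSubsol (P : ObstacleProblem X ι A B) (T : ℝ) (u : ℝ × X → ℝ) : Prop :=
  ∀ φ : ℝ × X → ℝ, ContDiff ℝ 2 φ → ∀ z : ℝ × X, z.1 ∈ Ico 0 T →
    IsLocalMaxOn (u - φ) (Icc 0 T ×ˢ univ) z →
      u z ≤ P.lower z ∨
        u z ≤ P.op z (fderiv ℝ φ z) ((1 / 2 : ℝ) • fderiv ℝ (fderiv ℝ φ) z) ∧ u z ≤ P.upper z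

/-- Viscosity supersolutions on `[0, T] × X`, tested only before the terminal time. -/
def IsSupersol (P : ObstacleProblem X ι A B) (T : ℝ) (v : ℝ × X → ℝ) : Prop :=
  ∀ φ : ℝ × X → ℝ, ContDiff ℝ 2 φ → ∀ z : ℝ × X, z.1 ∈ Ico 0 T →
    IsLocalMinOn (v - φ) (Icc 0 T ×ˢ univ) z →
      P.lower z ≤ v z ∧
        (P.op z (fderiv ℝ φ z) ((1 / 2 : ℝ) • fderiv ℝ (fderiv ℝ φ) z) ≤ v z ∨ P.upper z ≤ v z)

/-- `ψ` is a supersolution of all the linear equations governed by constant controls. -/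
def IsBarrier (P : ObstacleProblem X ι A B) (T : ℝ) (ψ : ℝ × X → ℝ) : Prop :=
  ∀ z : ℝ × X, z.1 ∈ Icc 0 T → ∀ a b, linOp (P.diffusion z) (P.drift z a b) ψ z ≤ 0

variable {P : ObstacleProblem X ι A B} {T : ℝ} {u v ψ : ℝ × X → ℝ} {K : Set (ℝ × X)} {z : ℝ × X}
variable {ℓ ℓ' : ℝ × X →L[ℝ] ℝ} {Q Q' : ℝ × X →L[ℝ] ℝ × X →L[ℝ] ℝ}

theorem op_congr_diag (hQ : ∀ ζ, Q ζ ζ = Q' ζ ζ) : P.op z ℓ Q = P.op z ℓ Q' := by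
  simp only [op, jetOp, hQ]

theorem op_fderiv_add_jetPoly (hψ : ContDiff ℝ 2 ψ) :
    P.op z (fderiv ℝ (ψ + jetPoly z ℓ Q) z)
      ((1 / 2 : ℝ) • fderiv ℝ (fderiv ℝ (ψ + jetPoly z ℓ Q)) z) =
    P.op z (ℓ + fderiv ℝ ψ z) (Q + (1 / 2 : ℝ) • fderiv ℝ (fderiv ℝ ψ) z) := by
  have hψ₁ : Differentiable ℝ ψ := hψ.differentiable two_ne_zero
  have hjet₁ : Differentiable ℝ (jetPoly z ℓ Q) :=
    (contDiff_jetPoly z ℓ Q).differentiable two_ne_zero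
  have hfirst : fderiv ℝ (ψ + jetPoly z ℓ Q) = fderiv ℝ ψ + fderiv ℝ (jetPoly z ℓ Q) :=
    funext fun y => fderiv_add (hψ₁ y) (hjet₁ y)
  have hsecond : fderiv ℝ (fderiv ℝ (ψ + jetPoly z ℓ Q)) z =
      fderiv ℝ (fderiv ℝ ψ) z + fderiv ℝ (fderiv ℝ (jetPoly z ℓ Q)) z := by
    rw [hfirst]
    exact fderiv_add (hasFDerivAt_fderiv_of_contDiff hψ z).differentiableAt
      (hasFDerivAt_fderiv_of_contDiff (contDiff_jetPoly z ℓ Q) z).differentiableAt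
  have hℓ : fderiv ℝ (ψ + jetPoly z ℓ Q) z = ℓ + fderiv ℝ ψ z := by
    refine ContinuousLinearMap.ext fun ζ => ?_
    rw [hfirst, Pi.add_apply, _root_.add_apply, _root_.add_apply, fderiv_jetPoly_apply, add_comm]
  rw [hℓ]
  refine op_congr_diag fun ζ => ?_
  simp only [hsecond, _root_.smul_apply, _root_.add_apply, fderiv_fderiv_jetPoly_apply, smul_eq_mul]
  ring

theorem op_add_fderiv_le [Nonempty A] [Nonempty B] (hF : ∃ C, ∀ a b, ‖P.drift z a b‖ ≤ C)
    (hG : ∃ C, ∀ a b, |P.payoff z a b| ≤ C) (hψ : P.IsBarrier T ψ) (hz : z.1 ∈ Icc 0 T) :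
    P.op z (ℓ + fderiv ℝ ψ z) (Q + (1 / 2 : ℝ) • fderiv ℝ (fderiv ℝ ψ) z) ≤ P.op z ℓ Q :=
  jetOp_add_fderiv_le hF hG (hψ z hz) ℓ Q

theorem IsSubsol.of_superjet [Nonempty A] [Nonempty B] (hu : P.IsSubsol T u)
    (hF : ∃ C, ∀ a b, ‖P.drift z a b‖ ≤ C) (hG : ∃ C, ∀ a b, |P.payoff z a b| ≤ C)
    (hψ : ContDiff ℝ 2 ψ) (hbarrier : P.IsBarrier T ψ) (hz : z.1 ∈ Ico 0 T)
    (hK : K ∈ nhdsWithin z (Icc 0 T ×ˢ univ)) (hjet : HasSuperjetWithin K (u - ψ) z ℓ Q) :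
    u z ≤ P.lower z ∨ u z ≤ P.op z ℓ Q ∧ u z ≤ P.upper z := by
  have hmax : IsLocalMaxOn (u - (ψ + jetPoly z ℓ Q)) (Icc 0 T ×ˢ univ) z := by
    filter_upwards [nhdsWithin_le_iff.mpr hK hjet] with y hy
    simp only [Pi.sub_apply, Pi.add_apply, jetPoly, sub_self, map_zero, add_zero] at hy ⊢
    linarith
  refine (hu (ψ + jetPoly z ℓ Q) (hψ.add (contDiff_jetPoly z ℓ Q)) z hz hmax).imp_right
    (And.imp_left fun hop => ?_)
  rw [op_fderiv_add_jetPoly hψ] at hop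
  exact hop.trans (op_add_fderiv_le hF hG hbarrier (Ico_subset_Icc_self hz))

theorem IsSupersol.of_subjet [Nonempty A] [Nonempty B] (hv : P.IsSupersol T v)
    (hF : ∃ C, ∀ a b, ‖P.drift z a b‖ ≤ C) (hG : ∃ C, ∀ a b, |P.payoff z a b| ≤ C)
    (hψ : ContDiff ℝ 2 ψ) (hbarrier : P.IsBarrier T ψ) (hz : z.1 ∈ Ico 0 T)
    (hK : K ∈ nhdsWithin z (Icc 0 T ×ˢ univ)) (hjet : HasSubjetWithin K (v + ψ) z ℓ Q) :
    P.lower z ≤ v z ∧ (P.op z ℓ Q ≤ v z ∨ P.upper z ≤ v z) := by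
  have hmin : IsLocalMinOn (v - (-ψ + jetPoly z ℓ Q)) (Icc 0 T ×ˢ univ) z := by
    filter_upwards [nhdsWithin_le_iff.mpr hK hjet] with y hy
    simp only [Pi.sub_apply, Pi.add_apply, Pi.neg_apply, jetPoly, sub_self, map_zero,
      add_zero] at hy ⊢
    linarith
  have hneg : ContDiff ℝ 2 (-ψ) := hψ.neg
  refine (hv (-ψ + jetPoly z ℓ Q) (hneg.add (contDiff_jetPoly z ℓ Q)) z hz hmin).imp_right
    (Or.imp_left fun hop => ?_)
  have hfirst : fderiv ℝ (-ψ) = -fderiv ℝ ψ := funext fun _ => fderiv_neg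
  rw [op_fderiv_add_jetPoly hneg, hfirst, fderiv_neg] at hop
  have hcancel : Q + (1 / 2 : ℝ) • -fderiv ℝ (fderiv ℝ ψ) z +
      (1 / 2 : ℝ) • fderiv ℝ (fderiv ℝ ψ) z = Q := by module
  refine le_trans ?_ hop
  simpa only [hcancel, Pi.neg_apply, neg_add_cancel_right] using
    op_add_fderiv_le (ℓ := ℓ + (-fderiv ℝ ψ) z) (Q := Q + (1 / 2 : ℝ) • -fderiv ℝ (fderiv ℝ ψ) z)
      hF hG hbarrier (Ico_subset_Icc_self hz)

end ObstacleProblem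

end ObstacleProblem

section Modulus

variable {Z Y E : Type*} [PseudoMetricSpace Z]

/-- Points of `K` at distance less than `ρ` have images under `f` at distance at most `ε`. -/
def HasModulusOn [Dist E] (f : Z → E) (K : Set Z) (ρ ε : ℝ) : Prop :=
  ∀ z ∈ K, ∀ w ∈ K, dist z w < ρ → dist (f z) (f w) ≤ ε

theorem eventually_forall_hasModulusOn [PseudoMetricSpace E] [TopologicalSpace Y] [CompactSpace Y]
    {K : Set Z} (hK : IsCompact K) {f : Z × Y → E} (hf : ContinuousOn f (K ×ˢ univ)) {ε : ℝ}
    (hε : 0 < ε) :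
    ∀ᶠ ρ in nhdsWithin 0 (Ioi 0), ∀ y, HasModulusOn (fun z => f (z, y)) K ρ ε := by
  have : CompactSpace K := isCompact_iff_compactSpace.mp hK
  let F : C(K × Y, E) := ⟨fun p => f (p.1, p.2), hf.comp_continuous
    (continuous_subtype_val.prodMap continuous_id) fun p => ⟨p.1.2, mem_univ _⟩⟩
  obtain ⟨ρ₀, hρ₀, hF⟩ := Metric.uniformContinuous_iff.mp
    (CompactSpace.uniformContinuous_of_continuous F.curry.continuous) ε hε
  filter_upwards [Ioo_mem_nhdsGT hρ₀] with ρ hρ y z hz w hw hzw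
  exact (ContinuousMap.dist_apply_le_dist y).trans
    (hF (a := ⟨z, hz⟩) (b := ⟨w, hw⟩) (hzw.trans hρ.2)).le

theorem eventually_hasModulusOn [PseudoMetricSpace E] {K : Set Z} (hK : IsCompact K) {f : Z → E}
    (hf : ContinuousOn f K) {ε : ℝ} (hε : 0 < ε) :
    ∀ᶠ ρ in nhdsWithin 0 (Ioi 0), HasModulusOn f K ρ ε :=
  (eventually_forall_hasModulusOn (Y := Unit) hK (f := f ∘ Prod.fst)
    (hf.comp continuousOn_fst fun _ hp => hp.1) hε).mono fun _ h => h ()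

theorem HasModulusOn.norm_sub_le {X E : Type*} [NormedAddCommGroup X] [NormedAddCommGroup E]
    {f : ℝ × X → E} {I : Set ℝ} {S : Set X} {ρ ε C : ℝ} (hf : HasModulusOn f (I ×ˢ S) ρ ε)
    (hlip : ∀ t ∈ I, ∀ x y, ‖f (t, x) - f (t, y)‖ ≤ C * ‖x - y‖) {z w : ℝ × X}
    (hz : z ∈ I ×ˢ S) (hw : w ∈ I ×ˢ S) (hzw : |z.1 - w.1| < ρ) :
    ‖f z - f w‖ ≤ C * ‖z.2 - w.2‖ + ε := by
  have hdist : dist (z.1, w.2) w = |z.1 - w.1| := by simp [Prod.dist_eq, Real.dist_eq]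
  refine (norm_sub_le_norm_sub_add_norm_sub _ (f (z.1, w.2)) _).trans
    (add_le_add (hlip z.1 hz.1 z.2 w.2) ?_)
  rw [← dist_eq_norm]
  exact hf (z.1, w.2) ⟨hz.1, hw.2⟩ w hw (hdist.trans_lt hzw)

end Modulus

theorem exists_linearMap_apply_eq_of_linearIndependent {𝕜 X Y ι : Type*} [DivisionRing 𝕜]
    [AddCommGroup X] [Module 𝕜 X] [AddCommGroup Y] [Module 𝕜 Y] {c : ι → X}
    (hc : LinearIndependent 𝕜 c) (c' : ι → Y) : ∃ M : X →ₗ[𝕜] Y, ∀ k, M (c k) = c' k := by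
  obtain ⟨coords, hcoords⟩ := (Finsupp.linearCombination 𝕜 c).exists_leftInverse_of_injective
    (linearIndependent_iff_ker.mp hc)
  refine ⟨(Finsupp.linearCombination 𝕜 c').comp coords, fun k => ?_⟩
  have hk : coords (c k) = Finsupp.single k 1 := by
    simpa using DFunLike.congr_fun hcoords (Finsupp.single k 1)
  simp [hk]

section FineContact

variable {X : Type*} [NormedAddCommGroup X]

theorem scaledNormSq_nonneg (θ : ℝ) (z : ℝ × X) : 0 ≤ scaledNormSq θ z :=
  add_nonneg (sq_nonneg _) (sq_nonneg _)

theorem scaledNormSq_zero (θ : ℝ) : scaledNormSq θ (0 : ℝ × X) = 0 := by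
  simp [scaledNormSq]

theorem abs_fst_lt_of_scaledNormSq_lt {θ ρ : ℝ} {z : ℝ × X} (hθ : 0 < θ) (hρ : 0 ≤ ρ)
    (h : scaledNormSq θ z < ρ ^ 2) : |z.1| < ρ * θ := by
  have hsq : (z.1 / θ) ^ 2 < ρ ^ 2 := (le_add_of_nonneg_right (sq_nonneg _)).trans_lt h
  have habs := abs_lt_of_sq_lt_sq hsq hρ
  rwa [abs_div, abs_of_pos hθ, div_lt_iff₀ hθ] at habs

theorem norm_lt_of_scaledNormSq_lt {θ ρ : ℝ} {z : ℝ × X} (hθ : 0 < θ) (hθ' : θ ≤ 1) (hρ : 0 ≤ ρ)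
    (h : scaledNormSq θ z < ρ ^ 2) : ‖z‖ < ρ := by
  refine max_lt ?_ (lt_of_pow_lt_pow_left₀ 2 hρ ((le_add_of_nonneg_left (sq_nonneg _)).trans_lt h))
  exact (abs_fst_lt_of_scaledNormSq_lt hθ hρ h).trans_le (mul_le_of_le_one_right hρ hθ')

variable [InnerProductSpace ℝ X] {K : Set (ℝ × X)} {U V : ℝ × X → ℝ} {τ θ δ ε ρ : ℝ} {ω : ℝ → ℝ}
variable {z w : ℝ × X} {ℓ ℓ' : ℝ × X →L[ℝ] ℝ} {Q : ℝ × X →L[ℝ] ℝ × X →L[ℝ] ℝ}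

namespace IsDoublingContact

theorem scaledNormSq_div_le (h : IsDoublingContact K U V τ θ δ z w ℓ ℓ' Q) :
    scaledNormSq θ (z - w) / (2 * τ) ≤ V z - V w + δ := by
  have hle := h.le_add z h.left_mem z h.left_mem
  rw [sub_self z, scaledNormSq_zero, zero_div] at hle
  linarith

theorem sub_le_add (h : IsDoublingContact K U V τ θ δ z w ℓ ℓ' Q) (hτ : 0 < τ) {z' : ℝ × X}
    (hz' : z' ∈ K) : U z' - V z' ≤ U z - V w + δ := by
  have hle := h.le_add z' hz' z' hz'
  have hpen : 0 ≤ scaledNormSq θ (z - w) / (2 * τ) := by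
    have := scaledNormSq_nonneg θ (z - w)
    positivity
  rw [sub_self z', scaledNormSq_zero, zero_div] at hle
  linarith

theorem apply_space_le (h : IsDoublingContact K U V τ θ δ z w ℓ ℓ' Q) (v v' : X) :
    ℓ (0, v) ≤ ℓ' (0, v') + ((‖z.2 - w.2‖ / τ + δ) * ‖v - v'‖ + δ * ‖v'‖) := by
  have hsplit : ℓ (0, v) = ℓ (0, v - v') + ℓ (0, v') := by
    rw [← map_add]
    simp
  linarith [le_of_abs_le (h.space_le (v - v')), le_of_abs_le (h.space_sub_le v')]

theorem exists_subjet_of_linearIndependent [FiniteDimensional ℝ X] {ι : Type*} {c c' : ι → X}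
    (h : IsDoublingContact K U V τ θ δ z w ℓ ℓ' Q) (hc' : LinearIndependent ℝ c') :
    ∃ Q', HasSubjetWithin K V w ℓ' Q' ∧ ∀ k, Q (0, c k) (0, c k) =
      Q' (0, c' k) (0, c' k) + (‖c k - c' k‖ ^ 2 / τ + 2 * δ * ‖c k‖ ^ 2) := by
  obtain ⟨M, hM⟩ := exists_linearMap_apply_eq_of_linearIndependent hc' c
  obtain ⟨Q', hQ', hQQ'⟩ := h.exists_subjet (LinearMap.toContinuousLinearMap M)
  refine ⟨Q', hQ', fun k => ?_⟩
  have hk := hQQ' (c' k)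
  rw [LinearMap.coe_toContinuousLinearMap', hM] at hk
  linarith

end IsDoublingContact

/-- A doubling contact whose penalisation errors are all controlled by `ε`. The function `ω`
prescribes how close in time the two points have to be, given the accuracy `ε * τ` at which the
coefficients are to be compared. -/
structure IsFineContact (K : Set (ℝ × X)) (U V : ℝ × X → ℝ) (ω : ℝ → ℝ) (ρ ε τ θ δ : ℝ)
    (z w : ℝ × X) (ℓ ℓ' : ℝ × X →L[ℝ] ℝ) (Q : ℝ × X →L[ℝ] ℝ × X →L[ℝ] ℝ) : Prop
    extends IsDoublingContact K U V τ θ δ z w ℓ ℓ' Q where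
  pos : 0 < τ
  le_one : τ ≤ 1
  error_le : δ ≤ ε
  error_div_le : δ / θ ≤ ε
  dist_lt : dist z w < ρ
  time_lt : |z.1 - w.1| < ω (ε * τ)
  space_sq_le : ‖z.2 - w.2‖ ^ 2 ≤ 4 * ε * τ

theorem IsDoublingContact.isFineContact
    (h : IsDoublingContact K U V τ θ (ε * θ) z w ℓ ℓ' Q) (hτ : 0 < τ) (hτ₁ : τ ≤ 1) (hθ : 0 < θ)
    (hθ₁ : θ ≤ 1) (hε : 0 ≤ ε) (hρ : 0 ≤ ρ) (hω : θ * ρ ≤ ω (ε * τ))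
    (hVρ : HasModulusOn V K ρ ε)
    (hsmall : scaledNormSq θ (z - w) < ρ ^ 2) :
    IsFineContact K U V ω ρ ε τ θ (ε * θ) z w ℓ ℓ' Q := by
  have hδ : ε * θ ≤ ε := mul_le_of_le_one_right hε hθ₁
  have hdist : dist z w < ρ := by
    rw [dist_eq_norm]
    exact norm_lt_of_scaledNormSq_lt hθ hθ₁ hρ hsmall
  refine ⟨h, hτ, hτ₁, hδ, (mul_div_cancel_right₀ ε hθ.ne').le, hdist, ?_, ?_⟩
  · refine (abs_fst_lt_of_scaledNormSq_lt hθ hρ hsmall).trans_le ?_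
    rwa [mul_comm]
  · have hV := hVρ z h.left_mem w h.right_mem hdist
    replace hV := le_of_abs_le ((Real.dist_eq _ _).symm.trans_le hV)
    calc ‖z.2 - w.2‖ ^ 2 ≤ scaledNormSq θ (z - w) := le_add_of_nonneg_left (sq_nonneg _)
      _ ≤ (V z - V w + ε * θ) * (2 * τ) := (div_le_iff₀ (by positivity)).mp h.scaledNormSq_div_le
      _ ≤ (ε + ε) * (2 * τ) := by gcongr
      _ = 4 * ε * τ := by ring

theorem exists_isFineContact [FiniteDimensional ℝ X] (hK : IsCompact K) (hne : K.Nonempty)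
    (hU : ContinuousOn U K) (hV : ContinuousOn V K) (hρ : 0 < ρ) (hε : 0 < ε)
    (hVρ : HasModulusOn V K ρ ε) (hω : ∀ μ, 0 < μ → 0 < ω μ) :
    ∃ τ θ δ z w ℓ ℓ' Q, IsFineContact K U V ω ρ ε τ θ δ z w ℓ ℓ' Q := by
  obtain ⟨N, hN⟩ := hK.exists_bound_of_continuousOn hV
  have hN₀ : 0 ≤ N := (norm_nonneg _).trans (hN _ hne.some_mem)
  obtain ⟨τ, hτ, hτ'⟩ : ∃ τ, 0 < τ ∧ τ < min 1 (ρ ^ 2 / (2 * (2 * N + ε))) :=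
    exists_between (by positivity)
  obtain ⟨θ, hθ, hθ'⟩ : ∃ θ, 0 < θ ∧ θ < min 1 (ω (ε * τ) / ρ) :=
    exists_between (lt_min one_pos (div_pos (hω _ (mul_pos hε hτ)) hρ))
  obtain ⟨hτ₁, hτρ⟩ := lt_min_iff.mp hτ'
  obtain ⟨hθ₁, hθω⟩ := lt_min_iff.mp hθ'
  rw [lt_div_iff₀ (by positivity)] at hτρ hθω
  obtain ⟨z, w, ℓ, ℓ', Q, h⟩ := exists_isDoublingContact hK hne hU hV hτ hθ (mul_pos hε hθ)
  have hsmall : scaledNormSq θ (z - w) < ρ ^ 2 :=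
    calc scaledNormSq θ (z - w) ≤ (V z - V w + ε * θ) * (2 * τ) :=
          (div_le_iff₀ (by positivity)).mp h.scaledNormSq_div_le
      _ ≤ (N - -N + ε * 1) * (2 * τ) := by
          gcongr
          · exact le_of_abs_le (hN z h.left_mem)
          · exact neg_le_of_abs_le (hN w h.right_mem)
      _ = τ * (2 * (2 * N + ε)) := by ring
      _ < ρ ^ 2 := hτρ
  exact ⟨τ, θ, ε * θ, z, w, ℓ, ℓ', Q,
    h.isFineContact hτ hτ₁.le hθ hθ₁.le hε.le hρ.le hθω.le hVρ hsmall⟩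

namespace IsFineContact

theorem norm_sub_le_two (h : IsFineContact K U V ω ρ ε τ θ δ z w ℓ ℓ' Q) (hε : ε ≤ 1) :
    ‖z.2 - w.2‖ ≤ 2 := by
  refine le_of_sq_le_sq ?_ zero_le_two
  nlinarith [h.space_sq_le, h.pos, h.le_one]

theorem sq_div_le (h : IsFineContact K U V ω ρ ε τ θ δ z w ℓ ℓ' Q) (hε : 0 ≤ ε) (hε' : ε ≤ 1)
    {C n : ℝ} (hn₀ : 0 ≤ n) (hn : n ≤ C * ‖z.2 - w.2‖ + ε * τ) :
    n ^ 2 / τ ≤ (8 * C ^ 2 + 2) * ε := by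
  rw [div_le_iff₀ h.pos]
  have hτ := h.pos.le
  calc n ^ 2 ≤ (C * ‖z.2 - w.2‖ + ε * τ) ^ 2 := by gcongr
    _ ≤ 2 * C ^ 2 * ‖z.2 - w.2‖ ^ 2 + 2 * (ε * τ) * (ε * τ) := by
        nlinarith [sq_nonneg (C * ‖z.2 - w.2‖ - ε * τ)]
    _ ≤ 2 * C ^ 2 * (4 * ε * τ) + 2 * 1 * (ε * τ) := by
        gcongr
        · exact h.space_sq_le
        · exact mul_le_one₀ hε' hτ h.le_one
    _ = (8 * C ^ 2 + 2) * ε * τ := by ring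

theorem mul_div_le (h : IsFineContact K U V ω ρ ε τ θ δ z w ℓ ℓ' Q) (hε : 0 ≤ ε) (hε' : ε ≤ 1)
    {C n : ℝ} (hC : 0 ≤ C) (hn : n ≤ C * ‖z.2 - w.2‖ + ε * τ) :
    ‖z.2 - w.2‖ / τ * n ≤ (4 * C + 2) * ε := by
  rw [div_mul_eq_mul_div, div_le_iff₀ h.pos]
  have hτ := h.pos.le
  calc ‖z.2 - w.2‖ * n ≤ ‖z.2 - w.2‖ * (C * ‖z.2 - w.2‖ + ε * τ) := by gcongr
    _ = C * ‖z.2 - w.2‖ ^ 2 + ‖z.2 - w.2‖ * (ε * τ) := by ring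
    _ ≤ C * (4 * ε * τ) + 2 * (ε * τ) := by
        gcongr
        · exact h.space_sq_le
        · exact h.norm_sub_le_two hε'
    _ = (4 * C + 2) * ε * τ := by ring

end IsFineContact

end FineContact

section Comparison

variable {X : Type*} [NormedAddCommGroup X]

/-- The closed cylinder over the ball of radius `R`. -/
abbrev closedCylinder (T R : ℝ) : Set (ℝ × X) :=
  Icc 0 T ×ˢ Metric.closedBall 0 R

theorem closedCylinder_mem_nhdsWithin {T R : ℝ} {z : ℝ × X} (hz : ‖z.2‖ < R) :
    closedCylinder T R ∈ nhdsWithin z (Icc 0 T ×ˢ univ) := by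
  filter_upwards [self_mem_nhdsWithin, mem_nhdsWithin_of_mem_nhds
    ((continuous_snd.norm.continuousAt (x := z)).eventually (gt_mem_nhds hz))] with y hyT hyR
  exact ⟨hyT.1, mem_closedBall_zero_iff.mpr (le_of_lt hyR)⟩

namespace ObstacleProblem

variable [InnerProductSpace ℝ X] {ι A B : Type*}

/-- The standing assumptions on the data on `[0, T] × X`, with a common constant `C`. Linear
independence of the diffusion vectors is the invertibility of the volatility matrix. -/
structure IsRegular [TopologicalSpace A] [TopologicalSpace B] (P : ObstacleProblem X ι A B)
    (T C : ℝ) : Prop where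
  linearIndependent : ∀ z : ℝ × X, z.1 ∈ Icc 0 T → LinearIndependent ℝ (P.diffusion z)
  continuousOn_diffusion : ContinuousOn P.diffusion (Icc 0 T ×ˢ univ)
  continuousOn_drift : ContinuousOn (fun p : (ℝ × X) × A × B => P.drift p.1 p.2.1 p.2.2)
    ((Icc 0 T ×ˢ univ) ×ˢ univ)
  continuousOn_payoff : ContinuousOn (fun p : (ℝ × X) × A × B => P.payoff p.1 p.2.1 p.2.2)
    ((Icc 0 T ×ˢ univ) ×ˢ univ)
  continuousOn_lower : ContinuousOn P.lower (Icc 0 T ×ˢ univ)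
  continuousOn_upper : ContinuousOn P.upper (Icc 0 T ×ˢ univ)
  norm_diffusion_le : ∀ z : ℝ × X, z.1 ∈ Icc 0 T → ∀ k, ‖P.diffusion z k‖ ≤ C
  norm_diffusion_sub_le : ∀ t ∈ Icc 0 T, ∀ x y k,
    ‖P.diffusion (t, x) k - P.diffusion (t, y) k‖ ≤ C * ‖x - y‖
  norm_drift_le : ∀ z : ℝ × X, z.1 ∈ Icc 0 T → ∀ a b, ‖P.drift z a b‖ ≤ C * (1 + ‖z.2‖)
  norm_drift_sub_le : ∀ t ∈ Icc 0 T, ∀ x y a b,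
    ‖P.drift (t, x) a b - P.drift (t, y) a b‖ ≤ C * ‖x - y‖

/-- Moduli of continuity of the data on `K`. The diffusion and the drift, which are compared at
accuracies yet to be chosen, come with a full modulus `ω`; for the other data a single accuracy `ε`
is enough. -/
structure HasModuli [Fintype ι] (P : ObstacleProblem X ι A B) (K : Set (ℝ × X)) (ω : ℝ → ℝ)
    (ρ ε : ℝ) : Prop where
  diffusion : ∀ μ, 0 < μ → HasModulusOn P.diffusion K (ω μ) μ
  drift : ∀ μ, 0 < μ → ∀ a b, HasModulusOn (fun z => P.drift z a b) K (ω μ) μ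
  payoff : ∀ a b, HasModulusOn (fun z => P.payoff z a b) K ρ ε
  lower : HasModulusOn P.lower K ρ ε
  upper : HasModulusOn P.upper K ρ ε

variable [TopologicalSpace A] [TopologicalSpace B] {P : ObstacleProblem X ι A B}
variable {T C R ρ ε τ θ δ : ℝ} {u v ψ U V : ℝ × X → ℝ} {ω : ℝ → ℝ} {z w : ℝ × X}
variable {ℓ ℓ' : ℝ × X →L[ℝ] ℝ} {Q : ℝ × X →L[ℝ] ℝ × X →L[ℝ] ℝ}

theorem IsRegular.exists_norm_drift_le (hP : P.IsRegular T C) (hz : z.1 ∈ Icc 0 T) :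
    ∃ N, ∀ a b, ‖P.drift z a b‖ ≤ N :=
  ⟨_, hP.norm_drift_le z hz⟩

theorem IsRegular.exists_abs_payoff_le [CompactSpace A] [CompactSpace B] (hP : P.IsRegular T C)
    (hz : z.1 ∈ Icc 0 T) : ∃ N, ∀ a b, |P.payoff z a b| ≤ N := by
  have hcont : Continuous fun p : A × B => P.payoff z p.1 p.2 :=
    hP.continuousOn_payoff.comp_continuous (Continuous.prodMk_right z)
      fun _ => ⟨⟨hz, mem_univ _⟩, mem_univ _⟩
  obtain ⟨N, hN⟩ := isCompact_univ.exists_bound_of_continuousOn hcont.continuousOn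
  exact ⟨N, fun a b => hN (a, b) (mem_univ _)⟩

theorem IsRegular.exists_hasModuli [Fintype ι] [CompactSpace A] [CompactSpace B] {K : Set (ℝ × X)}
    (hP : P.IsRegular T C) (hK : IsCompact K) (hKT : K ⊆ Icc 0 T ×ˢ univ) :
    ∃ ω : ℝ → ℝ, (∀ μ, 0 < μ → 0 < ω μ) ∧
      ∀ ε, 0 < ε → ∀ᶠ ρ in nhdsWithin 0 (Ioi 0), P.HasModuli K ω ρ ε := by
  have hω : ∀ μ : ℝ, ∃ r : ℝ, 0 < μ → 0 < r ∧ HasModulusOn P.diffusion K r μ ∧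
      ∀ y : A × B, HasModulusOn (fun z => P.drift z y.1 y.2) K r μ := fun μ => by
    by_cases hμ : 0 < μ
    · obtain ⟨r, hr, hr₀⟩ := ((eventually_hasModulusOn hK (hP.continuousOn_diffusion.mono hKT)
        hμ).and (eventually_forall_hasModulusOn hK
          (hP.continuousOn_drift.mono (prod_mono_left hKT)) hμ)).and self_mem_nhdsWithin |>.exists
      exact ⟨r, fun _ => ⟨hr₀, hr⟩⟩
    · exact ⟨0, fun h => absurd h hμ⟩
  choose ω hω using hω
  refine ⟨ω, fun μ hμ => (hω μ hμ).1, fun ε hε => ?_⟩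
  filter_upwards [eventually_forall_hasModulusOn hK
      (hP.continuousOn_payoff.mono (prod_mono_left hKT)) hε,
    eventually_hasModulusOn hK (hP.continuousOn_lower.mono hKT) hε,
    eventually_hasModulusOn hK (hP.continuousOn_upper.mono hKT) hε] with ρ hpayoff hlower hupper
  exact ⟨fun μ hμ => (hω μ hμ).2.1, fun μ hμ a b => (hω μ hμ).2.2 (a, b),
    fun a b => hpayoff (a, b), hlower, hupper⟩

variable [Fintype ι]

theorem IsRegular.drift_add_payoff_le (hP : P.IsRegular T C) (hC : 0 ≤ C) (hε : 0 < ε)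
    (hε₁ : ε ≤ 1)
    (h : IsFineContact (closedCylinder T R) U V ω ρ ε τ θ δ z w ℓ ℓ' Q)
    (hmod : P.HasModuli (closedCylinder T R) ω ρ ε) (a : A) (b : B) :
    ℓ (0, P.drift z a b) + P.payoff z a b ≤ ℓ' (0, P.drift w a b) + P.payoff w a b +
      (4 * C + 2 + 3 * (C * (1 + R)) + 1) * ε := by
  have hbound : ∀ z ∈ closedCylinder T R,
      ‖P.drift z a b‖ ≤ C * (1 + R) := fun z hz =>
    (hP.norm_drift_le z hz.1 a b).trans (by gcongr; exact mem_closedBall_zero_iff.mp hz.2)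
  obtain ⟨hz, hw⟩ := And.intro (hbound z h.left_mem) (hbound w h.right_mem)
  have hmain := h.mul_div_le hε.le hε₁ hC ((hmod.drift _ (mul_pos hε h.pos) a b).norm_sub_le
    (fun t ht x y => hP.norm_drift_sub_le t ht x y a b) h.left_mem h.right_mem h.time_lt)
  have hdiam : ‖P.drift z a b - P.drift w a b‖ ≤ 2 * (C * (1 + R)) := by
    linarith [norm_sub_le (P.drift z a b) (P.drift w a b)]
  have hpay := hmod.payoff a b z h.left_mem w h.right_mem h.dist_lt
  rw [Real.dist_eq] at hpay
  linarith [h.apply_space_le (P.drift z a b) (P.drift w a b), le_of_abs_le hpay,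
    mul_le_mul h.error_le hdiam (norm_nonneg _) hε.le,
    mul_le_mul h.error_le hw (norm_nonneg _) hε.le]

/-- The factor with which the penalisation error `ε` enters the comparison of the two operators
at a fine contact, for `n` diffusion vectors bounded by `C` and a drift bounded by `Φ`. -/
def errorFactor (n : ℕ) (C Φ : ℝ) : ℝ :=
  1 + n * (8 * C ^ 2 + 2 + 2 * C ^ 2) + (4 * C + 2 + 3 * Φ + 1)

theorem one_le_errorFactor {n : ℕ} {C Φ : ℝ} (hC : 0 ≤ C) (hΦ : 0 ≤ Φ) :
    1 ≤ errorFactor n C Φ := by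
  unfold errorFactor
  have : 0 ≤ n * (8 * C ^ 2 + 2 + 2 * C ^ 2) := by positivity
  linarith

variable [FiniteDimensional ℝ X] [CompactSpace A] [CompactSpace B]

theorem IsRegular.exists_subjet_op_le [Nonempty A] [Nonempty B] (hP : P.IsRegular T C)
    (hC : 0 ≤ C) (hε : 0 < ε) (hε₁ : ε ≤ 1)
    (h : IsFineContact (closedCylinder T R) U V ω ρ ε τ θ δ z w ℓ ℓ' Q)
    (hmod : P.HasModuli (closedCylinder T R) ω ρ ε) :
    ∃ Q', HasSubjetWithin (closedCylinder T R) V w ℓ' Q' ∧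
      P.op z ℓ Q ≤ P.op w ℓ' Q' + errorFactor (Fintype.card ι) C (C * (1 + R)) * ε := by
  obtain ⟨hz, hw⟩ := And.intro h.left_mem h.right_mem
  obtain ⟨Q', hQ', hQQ'⟩ :=
    h.exists_subjet_of_linearIndependent (c := P.diffusion z) (hP.linearIndependent w hw.1)
  have htime : ℓ (1, 0) ≤ ℓ' (1, 0) + ε := by linarith [le_of_abs_le h.time_sub_le, h.error_div_le]
  have hdiff (k : ι) : Q (0, P.diffusion z k) (0, P.diffusion z k) ≤
      Q' (0, P.diffusion w k) (0, P.diffusion w k) +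
        ((8 * C ^ 2 + 2) * ε + 2 * ε * C ^ 2) := by
    have hsub := HasModulusOn.norm_sub_le (f := fun z => P.diffusion z k) (fun z hz w hw hzw =>
      (dist_le_pi_dist _ _ k).trans (hmod.diffusion _ (mul_pos hε h.pos) z hz w hw hzw))
      (fun t ht x y => hP.norm_diffusion_sub_le t ht x y k) hz hw h.time_lt
    rw [hQQ' k]
    gcongr
    · exact h.sq_div_le hε.le hε₁ (norm_nonneg _) hsub
    · exact h.error_le
    · exact hP.norm_diffusion_le z hz.1 k
  refine ⟨Q', hQ', ?_⟩
  have hop : P.op z ℓ Q ≤ P.op w ℓ' Q' + _ :=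
    jetOp_le_add (hP.exists_norm_drift_le hz.1) (hP.exists_abs_payoff_le hz.1)
      (hP.exists_norm_drift_le hw.1) (hP.exists_abs_payoff_le hw.1) htime hdiff
      (hP.drift_add_payoff_le hC hε hε₁ h hmod)
  rw [errorFactor]
  linarith

theorem IsRegular.sub_le_of_isFineContact [Nonempty A] [Nonempty B] (hP : P.IsRegular T C)
    (hC : 0 ≤ C) (hR : 0 ≤ R) (hε : 0 < ε) (hε₁ : ε ≤ 1) (hu : P.IsSubsol T u)
    (hv : P.IsSupersol T v) (hψ : ContDiff ℝ 2 ψ) (hbarrier : P.IsBarrier T ψ)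
    (h : IsFineContact (closedCylinder T R) (u - ψ) (v + ψ) ω ρ ε τ θ δ z w ℓ ℓ' Q)
    (hmod : P.HasModuli (closedCylinder T R) ω ρ ε) (hz : z.1 ≠ T ∧ ‖z.2‖ ≠ R)
    (hw : w.1 ≠ T ∧ ‖w.2‖ ≠ R) :
    u z - v w ≤ errorFactor (Fintype.card ι) C (C * (1 + R)) * ε := by
  obtain ⟨hzK, hwK⟩ := And.intro h.left_mem h.right_mem
  obtain ⟨Q', hQ', hop⟩ := hP.exists_subjet_op_le hC hε hε₁ h hmod
  have hfactor : ε ≤ errorFactor (Fintype.card ι) C (C * (1 + R)) * ε :=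
    le_mul_of_one_le_left hε.le (one_le_errorFactor hC (by positivity))
  have hlower := le_of_abs_le (hmod.lower z hzK w hwK h.dist_lt)
  have hupper := le_of_abs_le (hmod.upper z hzK w hwK h.dist_lt)
  obtain ⟨hvlower, hvcases⟩ := hv.of_subjet (hP.exists_norm_drift_le hwK.1)
    (hP.exists_abs_payoff_le hwK.1) hψ hbarrier ⟨hwK.1.1, hwK.1.2.lt_of_ne hw.1⟩
    (closedCylinder_mem_nhdsWithin ((mem_closedBall_zero_iff.mp hwK.2).lt_of_ne hw.2)) hQ'
  rcases hu.of_superjet (hP.exists_norm_drift_le hzK.1) (hP.exists_abs_payoff_le hzK.1) hψ hbarrier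
    ⟨hzK.1.1, hzK.1.2.lt_of_ne hz.1⟩
    (closedCylinder_mem_nhdsWithin ((mem_closedBall_zero_iff.mp hzK.2).lt_of_ne hz.2))
    h.superjet with hulower | ⟨huop, huupper⟩
  · linarith
  · rcases hvcases with hvop | hvupper <;> linarith

theorem IsRegular.sub_le_mul_of_le_boundary [Nonempty A] [Nonempty B] (hP : P.IsRegular T C)
    (hC : 0 ≤ C) (hR : 0 ≤ R) (hε : 0 < ε) (hε₁ : ε ≤ 1) (hu : P.IsSubsol T u)
    (hv : P.IsSupersol T v) (huc : ContinuousOn u (closedCylinder T R))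
    (hvc : ContinuousOn v (closedCylinder T R)) (hψ : ContDiff ℝ 2 ψ)
    (hbarrier : P.IsBarrier T ψ) (hψ₀ : ∀ z, 0 ≤ ψ z)
    (hboundary : ∀ z ∈ closedCylinder T R, z.1 = T ∨ ‖z.2‖ = R → (u - ψ) z ≤ (v + ψ) z)
    {z₀ : ℝ × X} (hz₀ : z₀ ∈ closedCylinder T R) :
    (u - ψ) z₀ - (v + ψ) z₀ ≤ (errorFactor (Fintype.card ι) C (C * (1 + R)) + 1) * ε := by
  have hK : IsCompact (closedCylinder T R : Set (ℝ × X)) :=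
    isCompact_Icc.prod (isCompact_closedBall 0 R)
  have hU : ContinuousOn (u - ψ) (closedCylinder T R) := huc.sub hψ.continuous.continuousOn
  have hV : ContinuousOn (v + ψ) (closedCylinder T R) := hvc.add hψ.continuous.continuousOn
  obtain ⟨ω, hω, hmod⟩ := hP.exists_hasModuli hK (prod_mono_right (subset_univ _))
  obtain ⟨ρ, ⟨hρmod, hUρ, hVρ⟩, hρ⟩ := ((hmod ε hε).and ((eventually_hasModulusOn hK hU hε).and
    (eventually_hasModulusOn hK hV hε))).and self_mem_nhdsWithin |>.exists
  obtain ⟨τ, θ, δ, z, w, ℓ, ℓ', Q, h⟩ := exists_isFineContact hK ⟨z₀, hz₀⟩ hU hV hρ hε hVρ hω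
  have hfactor : ε ≤ errorFactor (Fintype.card ι) C (C * (1 + R)) * ε :=
    le_mul_of_one_le_left hε.le (one_le_errorFactor hC (by positivity))
  suffices (u - ψ) z - (v + ψ) w ≤ errorFactor (Fintype.card ι) C (C * (1 + R)) * ε by
    linarith [h.sub_le_add h.pos hz₀, h.error_le]
  by_cases hz : z.1 = T ∨ ‖z.2‖ = R
  · linarith [hboundary z h.left_mem hz,
      le_of_abs_le (hVρ z h.left_mem w h.right_mem h.dist_lt)]
  by_cases hw : w.1 = T ∨ ‖w.2‖ = R
  · linarith [hboundary w h.right_mem hw,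
      le_of_abs_le (hUρ z h.left_mem w h.right_mem h.dist_lt)]
  have hcontact := hP.sub_le_of_isFineContact hC hR hε hε₁ hu hv hψ hbarrier h hρmod
    (not_or.mp hz) (not_or.mp hw)
  simp only [Pi.sub_apply, Pi.add_apply]
  linarith [hψ₀ z, hψ₀ w]

theorem IsRegular.sub_le_add_of_le_boundary [Nonempty A] [Nonempty B] (hP : P.IsRegular T C)
    (hC : 0 ≤ C) (hu : P.IsSubsol T u) (hv : P.IsSupersol T v)
    (huc : ContinuousOn u (closedCylinder T R)) (hvc : ContinuousOn v (closedCylinder T R))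
    (hψ : ContDiff ℝ 2 ψ) (hbarrier : P.IsBarrier T ψ) (hψ₀ : ∀ z, 0 ≤ ψ z)
    (hboundary : ∀ z ∈ closedCylinder T R, z.1 = T ∨ ‖z.2‖ = R → (u - ψ) z ≤ (v + ψ) z)
    (hz : z ∈ closedCylinder T R) : (u - ψ) z ≤ (v + ψ) z := by
  have hR : 0 ≤ R := (norm_nonneg _).trans (mem_closedBall_zero_iff.mp hz.2)
  have hlim : Filter.Tendsto
      (fun ε : ℝ => (errorFactor (Fintype.card ι) C (C * (1 + R)) + 1) * ε)
      (nhdsWithin 0 (Ioi 0)) (nhds 0) :=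
    tendsto_nhdsWithin_of_tendsto_nhds ((continuous_const_mul _).tendsto' 0 0 (mul_zero _))
  refine sub_nonpos.mp (ge_of_tendsto hlim ?_)
  filter_upwards [Ioc_mem_nhdsGT one_pos] with ε hε
  exact hP.sub_le_mul_of_le_boundary hC hR hε.1 hε.2 hu hv huc hvc hψ hbarrier hψ₀ hboundary hz

theorem IsRegular.sub_le_two_mul_growthPenalty [Nonempty A] [Nonempty B] (hP : P.IsRegular T C)
    (hC : 0 ≤ C) (hu : P.IsSubsol T u) (hv : P.IsSupersol T v)
    (huc : ContinuousOn u (Icc 0 T ×ˢ univ)) (hvc : ContinuousOn v (Icc 0 T ×ˢ univ))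
    (hterminal : ∀ x, u (T, x) ≤ v (T, x)) {N : ℝ} {m : ℕ}
    (hgrowth : ∀ z : ℝ × X, z.1 ∈ Icc 0 T → u z - v z ≤ N * (1 + ‖z.2‖ ^ 2) ^ m)
    {β lam : ℝ} (hβ : 0 < β)
    (hlam : Fintype.card ι * (1 / 2 * ((m + 2) * (4 * m + 6) * C ^ 2)) + 4 * (m + 2) * C ≤ lam)
    (hz : z.1 ∈ Icc 0 T) : u z - v z ≤ 2 * growthPenalty β lam T m z := by
  obtain ⟨R, hR⟩ := exists_mul_pow_le_growthPenalty (X := X) (T := T) hβ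
    (le_trans (by positivity) hlam) N m
  have hbarrier : P.IsBarrier T (growthPenalty β lam T m) := fun z hz a b =>
    linOp_growthPenalty_nonpos hβ.le hC (hP.norm_diffusion_le z hz) (hP.norm_drift_le z hz a b) hlam
  have hsubset : closedCylinder T (max R ‖z.2‖) ⊆ Icc 0 T ×ˢ (univ : Set X) :=
    prod_mono_right (subset_univ _)
  have hpen := growthPenalty_nonneg (X := X) (lam := lam) (T := T) (m := m) hβ.le
  have hle := hP.sub_le_add_of_le_boundary hC hu hv (huc.mono hsubset) (hvc.mono hsubset)
    (contDiff_growthPenalty β lam T m) hbarrier hpen (fun y hy hboundary => ?_)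
    ⟨hz, mem_closedBall_zero_iff.mpr (le_max_right R ‖z.2‖)⟩
  · simp only [Pi.sub_apply, Pi.add_apply] at hle
    linarith
  · simp only [Pi.sub_apply, Pi.add_apply]
    rcases hboundary with hyT | hyR
    · obtain ⟨t, x⟩ := y
      obtain rfl : t = T := hyT
      linarith [hterminal x, hpen (t, x)]
    · linarith [hgrowth y hy.1, hR y hy.1.2 (hyR ▸ le_max_left _ _), hpen y]

theorem IsRegular.le_of_polynomial_growth [Nonempty A] [Nonempty B] (hP : P.IsRegular T C)
    (hC : 0 ≤ C) (hu : P.IsSubsol T u) (hv : P.IsSupersol T v)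
    (huc : ContinuousOn u (Icc 0 T ×ˢ univ)) (hvc : ContinuousOn v (Icc 0 T ×ˢ univ))
    (hterminal : ∀ x, u (T, x) ≤ v (T, x)) {N : ℝ} {m : ℕ}
    (hgrowth : ∀ z : ℝ × X, z.1 ∈ Icc 0 T → u z - v z ≤ N * (1 + ‖z.2‖ ^ 2) ^ m)
    (hz : z.1 ∈ Icc 0 T) : u z ≤ v z := by
  let lam : ℝ := Fintype.card ι * (1 / 2 * ((m + 2) * (4 * m + 6) * C ^ 2)) + 4 * (m + 2) * C
  have hlim : Filter.Tendsto (fun β => 2 * growthPenalty β lam T m z) (nhdsWithin 0 (Ioi 0))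
      (nhds 0) := by
    refine tendsto_nhdsWithin_of_tendsto_nhds (Continuous.tendsto' ?_ 0 0 (by simp [growthPenalty]))
    unfold growthPenalty
    fun_prop
  refine sub_nonpos.mp (ge_of_tendsto hlim ?_)
  filter_upwards [self_mem_nhdsWithin] with β hβ using
    hP.sub_le_two_mul_growthPenalty hC hu hv huc hvc hterminal hgrowth hβ le_rfl hz

end ObstacleProblem

end Comparison

section StarProblem

variable {d : ℕ} {A B : Type*}

theorem norm_colVec_le {M : Matrix (Fin d) (Fin d) ℝ} {k : Fin d} {c : ℝ}
    (hM : ∀ i, |M i k| ≤ c) : ‖colVec M k‖ ≤ d * c := by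
  rw [colVec_eq_sum]
  refine (norm_sum_le_of_le Finset.univ fun i _ => ?_).trans_eq (by simp : ∑ _ : Fin d, c = d * c)
  simpa [norm_smul] using hM i

theorem norm_colVec_sub_le {M N : Matrix (Fin d) (Fin d) ℝ} {k : Fin d} {c : ℝ}
    (h : ∀ i, |M i k - N i k| ≤ c) : ‖colVec M k - colVec N k‖ ≤ d * c :=
  norm_colVec_le (M := M - N) h

theorem continuous_colVec : Continuous (colVec : Matrix (Fin d) (Fin d) ℝ → _) :=
  continuous_pi fun k => (PiLp.continuous_toLp 2 _).comp
    (continuous_pi fun i => continuous_id.matrix_elem i k)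

theorem linearIndependent_colVec {M : Matrix (Fin d) (Fin d) ℝ} (hM : IsUnit M) :
    LinearIndependent ℝ (colVec M) :=
  (Matrix.linearIndependent_cols_iff_isUnit.mpr hM).map'
    (WithLp.linearEquiv 2 ℝ (Fin d → ℝ)).symm.toLinearMap (LinearEquiv.ker _)

/-- The equation (★) as an `ObstacleProblem`. -/
def starProblem (σm : ℝ → EuclideanSpace ℝ (Fin d) → Matrix (Fin d) (Fin d) ℝ)
    (f : ℝ → EuclideanSpace ℝ (Fin d) → A → B → EuclideanSpace ℝ (Fin d))
    (Γ : ℝ → EuclideanSpace ℝ (Fin d) → A → B → ℝ) (h h' : ℝ → EuclideanSpace ℝ (Fin d) → ℝ) :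
    ObstacleProblem (EuclideanSpace ℝ (Fin d)) (Fin d) A B where
  diffusion z := colVec (σm z.1 z.2)
  drift z := f z.1 z.2
  payoff z u v := Real.exp z.1 * Γ z.1 z.2 u v
  lower z := Real.exp z.1 * h z.1 z.2
  upper z := Real.exp z.1 * h' z.1 z.2

variable {T : ℝ} {σm : ℝ → EuclideanSpace ℝ (Fin d) → Matrix (Fin d) (Fin d) ℝ}
variable {f : ℝ → EuclideanSpace ℝ (Fin d) → A → B → EuclideanSpace ℝ (Fin d)}
variable {Γ : ℝ → EuclideanSpace ℝ (Fin d) → A → B → ℝ}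
variable {h h' : ℝ → EuclideanSpace ℝ (Fin d) → ℝ} {g : EuclideanSpace ℝ (Fin d) → ℝ}
variable {u v : ℝ × EuclideanSpace ℝ (Fin d) → ℝ}

theorem op_starProblem {φ : ℝ × EuclideanSpace ℝ (Fin d) → ℝ} (hφ : ContDiff ℝ 2 φ) {t : ℝ}
    {x : EuclideanSpace ℝ (Fin d)} (hσ : IsUnit (σm t x)) :
    (starProblem σm f Γ h h').op (t, x) (fderiv ℝ φ (t, x))
        ((1 / 2 : ℝ) • fderiv ℝ (fderiv ℝ φ) (t, x)) =
      timeDeriv φ t x + genL σm φ t x +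
        Real.exp t * Hstar σm f Γ t x (Real.exp (-t) • mvec (σm t x)ᵀ (spaceGrad φ t x)) := by
  simp only [ObstacleProblem.op, jetOp, starProblem, _root_.smul_apply, smul_eq_mul,
    timeDeriv_eq_fderiv hφ, genL_eq_sum σm hφ, exp_mul_Hstar σm f Γ hσ, inner_spaceGrad hφ]

theorem IsSubsolStar.isSubsol (hσ : ∀ t ∈ Icc (0 : ℝ) T, ∀ x, IsUnit (σm t x))
    (hu : IsSubsolStar T σm f Γ h h' g u) : (starProblem σm f Γ h h').IsSubsol T u := by
  rintro φ hφ ⟨t, x⟩ ht hmax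
  rw [op_starProblem hφ (hσ t (Ico_subset_Icc_self ht) x)]
  have hmin := min_le_iff.mp (hu.2 φ hφ t (Ico_subset_Icc_self ht) x hmax)
  refine hmin.imp sub_nonpos.mp fun hle => ?_
  obtain ⟨hop, hupper⟩ := max_le_iff.mp hle
  exact ⟨by linarith, sub_nonpos.mp hupper⟩

theorem IsSupersolStar.isSupersol (hσ : ∀ t ∈ Icc (0 : ℝ) T, ∀ x, IsUnit (σm t x))
    (hv : IsSupersolStar T σm f Γ h h' g v) : (starProblem σm f Γ h h').IsSupersol T v := by
  rintro φ hφ ⟨t, x⟩ ht hmin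
  rw [op_starProblem hφ (hσ t (Ico_subset_Icc_self ht) x)]
  obtain ⟨hlower, hle⟩ := le_min_iff.mp (hv.2 φ hφ t (Ico_subset_Icc_self ht) x hmin)
  exact ⟨sub_nonneg.mp hlower,
    (le_max_iff.mp hle).imp (fun hop => by linarith) fun hupper => sub_nonneg.mp hupper⟩

theorem continuousOn_reassoc {S X E : Type*} [TopologicalSpace S] [TopologicalSpace X]
    [TopologicalSpace A] [TopologicalSpace B] [TopologicalSpace E] {F : S → X → A → B → E}
    {I : Set S}
    (hF : ContinuousOn (fun p : S × X × A × B => F p.1 p.2.1 p.2.2.1 p.2.2.2) (I ×ˢ univ)) :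
    ContinuousOn (fun p : (S × X) × A × B => F p.1.1 p.1.2 p.2.1 p.2.2) ((I ×ˢ univ) ×ˢ univ) :=
  hF.comp (f := fun p : (S × X) × A × B => (p.1.1, p.1.2, p.2)) (by fun_prop)
    fun _ hp => ⟨hp.1.1, mem_univ _⟩

theorem exists_isRegular_starProblem [TopologicalSpace A] [TopologicalSpace B]
    (hσc : ContinuousOn (fun p : ℝ × EuclideanSpace ℝ (Fin d) => σm p.1 p.2) (Icc 0 T ×ˢ univ))
    (hσb : ∃ Cσ : ℝ, ∀ t ∈ Icc (0 : ℝ) T, ∀ x, ∀ i j, |σm t x i j| ≤ Cσ)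
    (hσL : ∃ Lσ : ℝ, ∀ t ∈ Icc (0 : ℝ) T, ∀ x y, ∀ i j,
      |σm t x i j - σm t y i j| ≤ Lσ * ‖x - y‖)
    (hσinv : ∀ t ∈ Icc (0 : ℝ) T, ∀ x, IsUnit (σm t x))
    (hfc : ContinuousOn (fun p : ℝ × EuclideanSpace ℝ (Fin d) × A × B =>
      f p.1 p.2.1 p.2.2.1 p.2.2.2) (Icc 0 T ×ˢ univ))
    (hfL : ∃ Lf : ℝ, ∀ t ∈ Icc (0 : ℝ) T, ∀ x y u v, ‖f t x u v - f t y u v‖ ≤ Lf * ‖x - y‖)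
    (hfG : ∃ Cf : ℝ, ∀ t ∈ Icc (0 : ℝ) T, ∀ x u v, ‖f t x u v‖ ≤ Cf * (1 + ‖x‖))
    (hΓc : ContinuousOn (fun p : ℝ × EuclideanSpace ℝ (Fin d) × A × B =>
      Γ p.1 p.2.1 p.2.2.1 p.2.2.2) (Icc 0 T ×ˢ univ))
    (hhc : ContinuousOn (fun p : ℝ × EuclideanSpace ℝ (Fin d) => h p.1 p.2) (Icc 0 T ×ˢ univ))
    (hh'c : ContinuousOn (fun p : ℝ × EuclideanSpace ℝ (Fin d) => h' p.1 p.2) (Icc 0 T ×ˢ univ)) :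
    ∃ C, 0 ≤ C ∧ (starProblem σm f Γ h h').IsRegular T C := by
  obtain ⟨Cσ, hσb⟩ := hσb
  obtain ⟨Lσ, hσL⟩ := hσL
  obtain ⟨Lf, hfL⟩ := hfL
  obtain ⟨Cf, hfG⟩ := hfG
  obtain ⟨C, hC⟩ : ∃ C, C ∈ upperBounds {0, d * Cσ, d * Lσ, Lf, Cf} :=
    (Set.toFinite {0, d * Cσ, d * Lσ, Lf, Cf}).bddAbove
  simp only [mem_upperBounds, mem_insert_iff, mem_singleton_iff, forall_eq_or_imp, forall_eq] at hC
  obtain ⟨hC₀, hCσ, hLσ, hLf, hCf⟩ := hC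
  have hexp : Continuous fun z : ℝ × EuclideanSpace ℝ (Fin d) => Real.exp z.1 := by fun_prop
  exact ⟨C, hC₀, {
    linearIndependent := fun z hz => linearIndependent_colVec (hσinv z.1 hz z.2)
    continuousOn_diffusion := continuous_colVec.comp_continuousOn hσc
    continuousOn_drift := continuousOn_reassoc hfc
    continuousOn_payoff :=
      (hexp.comp continuous_fst).continuousOn.mul (continuousOn_reassoc hΓc)
    continuousOn_lower := hexp.continuousOn.mul hhc
    continuousOn_upper := hexp.continuousOn.mul hh'c
    norm_diffusion_le := fun z hz k => (norm_colVec_le fun i => hσb z.1 hz z.2 i k).trans hCσ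
    norm_diffusion_sub_le := fun t ht x y k =>
      (norm_colVec_sub_le fun i => hσL t ht x y i k).trans (by rw [← mul_assoc]; gcongr)
    norm_drift_le := fun z hz a b => (hfG z.1 hz z.2 a b).trans (by gcongr)
    norm_drift_sub_le := fun t ht x y a b => (hfL t ht x y a b).trans (by gcongr) }⟩

end StarProblem

theorem exists_sub_le_mul_one_add_norm_sq_pow {X : Type*} [NormedAddCommGroup X] {T : ℝ}
    {u v : ℝ × X → ℝ}
    (h : ∃ (C : ℝ) (γ : ℕ), ∀ t ∈ Icc (0 : ℝ) T, ∀ x,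
      |u (t, x)| + |v (t, x)| ≤ C * (1 + ‖x‖ ^ γ)) :
    ∃ (N : ℝ) (m : ℕ), ∀ z : ℝ × X, z.1 ∈ Icc 0 T → u z - v z ≤ N * (1 + ‖z.2‖ ^ 2) ^ m := by
  obtain ⟨C, γ, hC⟩ := h
  refine ⟨2 * |C|, γ, fun z hz => ?_⟩
  have hone : 1 ≤ (1 + ‖z.2‖ ^ 2) ^ γ := one_le_pow₀ (le_add_of_nonneg_right (sq_nonneg _))
  have hpow : ‖z.2‖ ^ γ ≤ (1 + ‖z.2‖ ^ 2) ^ γ := by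
    gcongr
    nlinarith [sq_nonneg (‖z.2‖ - 1)]
  calc u z - v z ≤ |u z| + |v z| := by linarith [le_abs_self (u z), neg_abs_le (v z)]
    _ ≤ C * (1 + ‖z.2‖ ^ γ) := hC z.1 hz z.2
    _ ≤ |C| * ((1 + ‖z.2‖ ^ 2) ^ γ + (1 + ‖z.2‖ ^ 2) ^ γ) := by
        gcongr
        exact le_abs_self C
    _ = 2 * |C| * (1 + ‖z.2‖ ^ 2) ^ γ := by ring

theorem stmt_16_general {d : ℕ} {A B : Type*}
    [TopologicalSpace A] [CompactSpace A] [Nonempty A]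
    [TopologicalSpace B] [CompactSpace B] [Nonempty B] (T : ℝ)
    (σm : ℝ → EuclideanSpace ℝ (Fin d) → Matrix (Fin d) (Fin d) ℝ)
    (hσc : ContinuousOn (fun p : ℝ × EuclideanSpace ℝ (Fin d) => σm p.1 p.2) (Icc 0 T ×ˢ univ))
    (hσb : ∃ Cσ : ℝ, ∀ t ∈ Icc (0 : ℝ) T, ∀ x, ∀ i j, |σm t x i j| ≤ Cσ)
    (hσL : ∃ Lσ : ℝ, ∀ t ∈ Icc (0 : ℝ) T, ∀ x y, ∀ i j,
      |σm t x i j - σm t y i j| ≤ Lσ * ‖x - y‖)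
    (hσinv : ∀ t ∈ Icc (0 : ℝ) T, ∀ x, IsUnit (σm t x))
    (f : ℝ → EuclideanSpace ℝ (Fin d) → A → B → EuclideanSpace ℝ (Fin d))
    (hfc : ContinuousOn (fun p : ℝ × EuclideanSpace ℝ (Fin d) × A × B =>
      f p.1 p.2.1 p.2.2.1 p.2.2.2) (Icc 0 T ×ˢ univ))
    (hfL : ∃ Lf : ℝ, ∀ t ∈ Icc (0 : ℝ) T, ∀ x y u v, ‖f t x u v - f t y u v‖ ≤ Lf * ‖x - y‖)
    (hfG : ∃ Cf : ℝ, ∀ t ∈ Icc (0 : ℝ) T, ∀ x u v, ‖f t x u v‖ ≤ Cf * (1 + ‖x‖))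
    (Γ : ℝ → EuclideanSpace ℝ (Fin d) → A → B → ℝ)
    (hΓc : ContinuousOn (fun p : ℝ × EuclideanSpace ℝ (Fin d) × A × B =>
      Γ p.1 p.2.1 p.2.2.1 p.2.2.2) (Icc 0 T ×ˢ univ))
    (h h' : ℝ → EuclideanSpace ℝ (Fin d) → ℝ) (g : EuclideanSpace ℝ (Fin d) → ℝ)
    (hhc : ContinuousOn (fun p : ℝ × EuclideanSpace ℝ (Fin d) => h p.1 p.2) (Icc 0 T ×ˢ univ))
    (hh'c : ContinuousOn (fun p : ℝ × EuclideanSpace ℝ (Fin d) => h' p.1 p.2) (Icc 0 T ×ˢ univ))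
    (ub vb : ℝ × EuclideanSpace ℝ (Fin d) → ℝ)
    (hubc : ContinuousOn ub (Icc 0 T ×ˢ univ)) (hvbc : ContinuousOn vb (Icc 0 T ×ˢ univ))
    (hgrowth : ∃ (C : ℝ) (γ : ℕ), ∀ t ∈ Icc (0 : ℝ) T, ∀ x,
      |ub (t, x)| + |vb (t, x)| ≤ C * (1 + ‖x‖ ^ γ))
    (hsub : IsSubsolStar T σm f Γ h h' g ub) (hsup : IsSupersolStar T σm f Γ h h' g vb) :
    ∀ t ∈ Icc (0 : ℝ) T, ∀ x : EuclideanSpace ℝ (Fin d), ub (t, x) ≤ vb (t, x) := by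
  obtain ⟨C, hC, hregular⟩ :=
    exists_isRegular_starProblem hσc hσb hσL hσinv hfc hfL hfG hΓc hhc hh'c
  obtain ⟨N, m, hNm⟩ := exists_sub_le_mul_one_add_norm_sq_pow hgrowth
  intro t ht x
  exact hregular.le_of_polynomial_growth hC (hsub.isSubsol hσinv) (hsup.isSupersol hσinv) hubc hvbc
    (fun y => (hsub.1 y).trans (hsup.1 y)) hNm ht

/-- Comparison principle (content of the proof of Theorem 5.1): a continuous viscosity
subsolution of polynomial growth of the transformed equation (★) is dominated by a continuous
viscosity supersolution of polynomial growth. -/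
theorem stmt_16 {d : ℕ} (hd : 1 ≤ d) {A B : Type*}
    [MetricSpace A] [CompactSpace A] [Nonempty A]
    [MetricSpace B] [CompactSpace B] [Nonempty B]
    (T : ℝ) (hT : 0 < T)
    (σm : ℝ → EuclideanSpace ℝ (Fin d) → Matrix (Fin d) (Fin d) ℝ)
    (hσc : ContinuousOn (fun p : ℝ × EuclideanSpace ℝ (Fin d) => σm p.1 p.2)
      (Icc 0 T ×ˢ (univ : Set (EuclideanSpace ℝ (Fin d)))))
    (hσb : ∃ Cσ : ℝ, ∀ t ∈ Icc (0 : ℝ) T, ∀ x, ∀ i j, |σm t x i j| ≤ Cσ)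
    (hσL : ∃ Lσ : ℝ, ∀ t ∈ Icc (0 : ℝ) T, ∀ x y, ∀ i j,
      |σm t x i j - σm t y i j| ≤ Lσ * ‖x - y‖)
    (hσinv : ∀ t ∈ Icc (0 : ℝ) T, ∀ x, IsUnit (σm t x))
    (hσinvc : ContinuousOn (fun p : ℝ × EuclideanSpace ℝ (Fin d) => (σm p.1 p.2)⁻¹)
      (Icc 0 T ×ˢ (univ : Set (EuclideanSpace ℝ (Fin d)))))
    (hσinvb : ∃ Cσ' : ℝ, ∀ t ∈ Icc (0 : ℝ) T, ∀ x, ∀ i j, |(σm t x)⁻¹ i j| ≤ Cσ')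
    (f : ℝ → EuclideanSpace ℝ (Fin d) → A → B → EuclideanSpace ℝ (Fin d))
    (hfc : ContinuousOn (fun p : ℝ × EuclideanSpace ℝ (Fin d) × A × B =>
      f p.1 p.2.1 p.2.2.1 p.2.2.2)
      (Icc 0 T ×ˢ (univ : Set (EuclideanSpace ℝ (Fin d) × A × B))))
    (hfL : ∃ Lf : ℝ, ∀ t ∈ Icc (0 : ℝ) T, ∀ x y u v, ‖f t x u v - f t y u v‖ ≤ Lf * ‖x - y‖)
    (Cf : ℝ) (hfG : ∀ t ∈ Icc (0 : ℝ) T, ∀ x u v, ‖f t x u v‖ ≤ Cf * (1 + ‖x‖))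
    (Γ : ℝ → EuclideanSpace ℝ (Fin d) → A → B → ℝ)
    (hΓc : ContinuousOn (fun p : ℝ × EuclideanSpace ℝ (Fin d) × A × B =>
      Γ p.1 p.2.1 p.2.2.1 p.2.2.2)
      (Icc 0 T ×ˢ (univ : Set (EuclideanSpace ℝ (Fin d) × A × B))))
    (hΓG : ∃ (CΓ : ℝ) (pΓ : ℕ), ∀ t ∈ Icc (0 : ℝ) T, ∀ x u v,
      |Γ t x u v| ≤ CΓ * (1 + ‖x‖ ^ pΓ))
    (hΓuc : ∀ ε > (0 : ℝ), ∃ δ > (0 : ℝ), ∀ (u u' : A) (v v' : B),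
      dist u u' < δ → dist v v' < δ → ∀ t ∈ Icc (0 : ℝ) T, ∀ x,
        |Γ t x u v - Γ t x u' v'| < ε)
    (hIsaacs : ∀ t ∈ Icc (0 : ℝ) T, ∀ x z : EuclideanSpace ℝ (Fin d),
      (⨅ u : A, ⨆ v : B, Hfun σm f Γ t x z u v) = ⨆ v : B, ⨅ u : A, Hfun σm f Γ t x z u v)
    (h h' : ℝ → EuclideanSpace ℝ (Fin d) → ℝ) (g : EuclideanSpace ℝ (Fin d) → ℝ)
    (hhc : ContinuousOn (fun p : ℝ × EuclideanSpace ℝ (Fin d) => h p.1 p.2)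
      (Icc 0 T ×ˢ (univ : Set (EuclideanSpace ℝ (Fin d)))))
    (hh'c : ContinuousOn (fun p : ℝ × EuclideanSpace ℝ (Fin d) => h' p.1 p.2)
      (Icc 0 T ×ˢ (univ : Set (EuclideanSpace ℝ (Fin d)))))
    (hgc : Continuous g)
    (hhG : ∃ (Ch : ℝ) (ph : ℕ), ∀ t ∈ Icc (0 : ℝ) T, ∀ x,
      |h t x| + |h' t x| + |g x| ≤ Ch * (1 + ‖x‖ ^ ph))
    (hhh' : ∀ t ∈ Icc (0 : ℝ) T, ∀ x, h t x < h' t x)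
    (hhg : ∀ x, h T x ≤ g x ∧ g x ≤ h' T x)
    (ub vb : ℝ × EuclideanSpace ℝ (Fin d) → ℝ)
    (hubc : ContinuousOn ub (Icc 0 T ×ˢ (univ : Set (EuclideanSpace ℝ (Fin d)))))
    (hvbc : ContinuousOn vb (Icc 0 T ×ˢ (univ : Set (EuclideanSpace ℝ (Fin d)))))
    (hgrowth : ∃ (C : ℝ) (γ : ℕ), ∀ t ∈ Icc (0 : ℝ) T, ∀ x,
      |ub (t, x)| + |vb (t, x)| ≤ C * (1 + ‖x‖ ^ γ))
    (hsub : IsSubsolStar T σm f Γ h h' g ub)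
    (hsup : IsSupersolStar T σm f Γ h h' g vb) :
    ∀ t ∈ Icc (0 : ℝ) T, ∀ x : EuclideanSpace ℝ (Fin d), ub (t, x) ≤ vb (t, x) :=
  stmt_16_general T σm hσc hσb hσL hσinv f hfc hfL ⟨Cf, hfG⟩ Γ hΓc h h' g hhc hh'c ub vb
    hubc hvbc hgrowth hsub hsup
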